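/- Strong forward Brascamp–Lieb inequality (single-function version): let α ∈ [0,α_max], q ∈ [1,∞), and p* ∈ [0,∞] be such that 1/p* is a subgradient of Θ_{q'} at α, where q' = q/(q−1) is the Hölder conjugate of q (q' = ∞ when q = 1). Then for every p ∈ (0,∞), every n ≥ 1, and all measurable f : 𝒳ⁿ → [0,∞) (not a.e. zero) such that (1/n) Ent_{p,p*}(f) ≥ α if p ≥ p* and (1/n) Ent_{p,p*}(f) ≤ α if p ≤ p*, one has ‖P_{X|Y}^{⊗n}(f)‖_q ≤ exp(−n (Θ_{q'}(α) − α/p)) · ‖f‖_p. -/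

import Mathlib

open MeasureTheory ProbabilityTheory Set Filter
open scoped ENNReal NNReal BigOperators Classical Topology

noncomputable section

namespace BL

variable {X : Type*} {Y : Type*} [MeasurableSpace X] [MeasurableSpace Y]

/-! ### Extended logarithm, exponential, and division conventions -/

/-- Extended logarithm `ℝ≥0∞ → EReal`, with `log 0 = ⊥` and `log ⊤ = ⊤`. -/
def elog (x : ℝ≥0∞) : EReal :=
  if x = 0 then ⊥ else if x = ⊤ then ⊤ else ((Real.log x.toReal : ℝ) : EReal)

/-- Extended exponential `EReal → ℝ≥0∞`, with `exp ⊥ = 0` and `exp ⊤ = ⊤`. -/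
def eexp (x : EReal) : ℝ≥0∞ :=
  if x = ⊥ then 0 else if x = ⊤ then ⊤ else ENNReal.ofReal (Real.exp x.toReal)

/-- Division of an extended real by a real, with the conventions `a/0 = +∞` for `a > 0`,
`a/0 = -∞` for `a < 0` and `0/0 = 0`. -/
def ediv (x : EReal) (c : ℝ) : EReal :=
  if c = 0 then (if 0 < x then ⊤ else if x < 0 then ⊥ else 0)
  else x * ((c⁻¹ : ℝ) : EReal)

/-- Division of a real by an extended real, with the convention `t/(±∞) = 0`. -/
def divE (t : ℝ) (r : EReal) : EReal :=
  if r = ⊤ ∨ r = ⊥ then 0 else ((t / r.toReal : ℝ) : EReal)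

/-- Hölder conjugate, as an extended real (`conj 1 = ⊤`). -/
def conj (q : ℝ) : EReal := if q = 1 then ⊤ else ((q / (q - 1) : ℝ) : EReal)

/-! ### Norms with a real (possibly negative) exponent -/

/-- `p`-"norm" of an `ℝ≥0∞`-valued function (`p` a nonzero real). -/
def enorm (P : Measure X) (F : X → ℝ≥0∞) (p : ℝ) : ℝ≥0∞ :=
  (∫⁻ x, F x ^ p ∂P) ^ (1 / p)

/-- `∞`-norm (essential supremum) of an `ℝ≥0∞`-valued function. -/
def enormInf (P : Measure X) (F : X → ℝ≥0∞) : ℝ≥0∞ := essSup F P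

/-- `p`-"norm" of a nonnegative real-valued function. -/
def rnorm (P : Measure X) (f : X → ℝ) (p : ℝ) : ℝ≥0∞ :=
  enorm P (fun x => ENNReal.ofReal (f x)) p

/-- `∞`-norm of a nonnegative real-valued function. -/
def rnormInf (P : Measure X) (f : X → ℝ) : ℝ≥0∞ :=
  enormInf P (fun x => ENNReal.ofReal (f x))

/-! ### Divergences -/

/-- Kullback--Leibler divergence, valued in `EReal` (equal to `⊤` when undefined). -/
def KL (Q P : Measure X) : EReal :=
  if Q ≪ P ∧ Integrable (fun x => Real.log (Q.rnDeriv P x).toReal) Q then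
    ((∫ x, Real.log (Q.rnDeriv P x).toReal ∂Q : ℝ) : EReal)
  else ⊤

/-- Rényi divergence of order `s` (`s = 1` gives the KL divergence). -/
def Renyi (s : ℝ) (Q P : Measure X) : EReal :=
  if s = 1 then KL Q P
  else (((s - 1)⁻¹ : ℝ) : EReal) *
    elog (∫⁻ x, Q.rnDeriv (Q + P) x ^ s * P.rnDeriv (Q + P) x ^ (1 - s) ∂(Q + P))

/-- First marginal of a measure on a product space. -/
def m1 (P : Measure (X × Y)) : Measure X := P.map Prod.fst

/-- Second marginal of a measure on a product space. -/
def m2 (P : Measure (X × Y)) : Measure Y := P.map Prod.snd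

/-- Couplings of a pair of (probability) measures. -/
def couplings (μ : Measure X) (ν : Measure Y) : Set (Measure (X × Y)) :=
  {π | IsProbabilityMeasure π ∧ π.map Prod.fst = μ ∧ π.map Prod.snd = ν}

/-- `𝔻(QX, QY ‖ P)` : minimum relative entropy over couplings. -/
def Dmin (QX : Measure X) (QY : Measure Y) (P : Measure (X × Y)) : EReal :=
  ⨅ (π : Measure (X × Y)) (_ : π ∈ couplings QX QY), KL π P

/-! ### The functions φ and their envelopes -/

/-- `φ̲(s,t)`. -/
def phiL (P : Measure (X × Y)) (s t : ℝ) : EReal :=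
  ⨅ (QX : Measure X) (QY : Measure Y) (_ : IsProbabilityMeasure QX)
    (_ : IsProbabilityMeasure QY) (_ : QX ≪ m1 P) (_ : QY ≪ m2 P)
    (_ : KL QX (m1 P) = (s : EReal)) (_ : KL QY (m2 P) = (t : EReal)),
    Dmin QX QY P

/-- `φ̄(s,t)`. -/
def phiU (P : Measure (X × Y)) (s t : ℝ) : EReal :=
  ⨆ (QX : Measure X) (QY : Measure Y) (_ : IsProbabilityMeasure QX)
    (_ : IsProbabilityMeasure QY) (_ : QX ≪ m1 P) (_ : QY ≪ m2 P)
    (_ : KL QX (m1 P) = (s : EReal)) (_ : KL QY (m2 P) = (t : EReal)),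
    Dmin QX QY P

/-- Lower convex envelope on `[0,∞)²`, via convex combinations of (at most) 4 points
(Carathéodory). -/
def lce2 (F : ℝ → ℝ → EReal) (a b : ℝ) : EReal :=
  ⨅ (q : Fin 4 → ℝ) (x : Fin 4 → ℝ × ℝ) (_ : ∀ i, 0 ≤ q i) (_ : ∑ i, q i = 1)
    (_ : ∀ i, 0 ≤ (x i).1 ∧ 0 ≤ (x i).2)
    (_ : ∑ i, q i * (x i).1 = a) (_ : ∑ i, q i * (x i).2 = b),
    ∑ i, (q i : EReal) * F (x i).1 (x i).2

/-- Upper concave envelope on `[0,∞)²`. -/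
def uce2 (F : ℝ → ℝ → EReal) (a b : ℝ) : EReal :=
  ⨆ (q : Fin 4 → ℝ) (x : Fin 4 → ℝ × ℝ) (_ : ∀ i, 0 ≤ q i) (_ : ∑ i, q i = 1)
    (_ : ∀ i, 0 ≤ (x i).1 ∧ 0 ≤ (x i).2)
    (_ : ∑ i, q i * (x i).1 = a) (_ : ∑ i, q i * (x i).2 = b),
    ∑ i, (q i : EReal) * F (x i).1 (x i).2

/-- Lower convex envelope on `[0,∞)`. -/
def lce1 (F : ℝ → EReal) (a : ℝ) : EReal :=
  ⨅ (q : Fin 3 → ℝ) (x : Fin 3 → ℝ) (_ : ∀ i, 0 ≤ q i) (_ : ∑ i, q i = 1)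
    (_ : ∀ i, 0 ≤ x i) (_ : ∑ i, q i * x i = a),
    ∑ i, (q i : EReal) * F (x i)

/-- Upper concave envelope on `[0,∞)`. -/
def uce1 (F : ℝ → EReal) (a : ℝ) : EReal :=
  ⨆ (q : Fin 3 → ℝ) (x : Fin 3 → ℝ) (_ : ∀ i, 0 ≤ q i) (_ : ∑ i, q i = 1)
    (_ : ∀ i, 0 ≤ x i) (_ : ∑ i, q i * x i = a),
    ∑ i, (q i : EReal) * F (x i)

/-- `Θ̲(α,β)`: increasing lower convex envelope of `φ̲`. -/
def ThetaL (P : Measure (X × Y)) (α β : ℝ) : EReal :=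
  ⨅ (s : ℝ) (t : ℝ) (_ : α ≤ s) (_ : β ≤ t), lce2 (phiL P) s t

/-- `Θ̄(α,β)`: increasing upper concave envelope of `φ̄`. -/
def ThetaU (P : Measure (X × Y)) (α β : ℝ) : EReal :=
  ⨆ (s : ℝ) (t : ℝ) (_ : 0 ≤ s) (_ : s ≤ α) (_ : 0 ≤ t) (_ : t ≤ β), uce2 (phiU P) s t

/-- `φ_r(s) = inf_{t ≥ 0} (φ̲(s,t) - t/r)` for `r ∈ [1,∞]` (`r` an extended real). -/
def phiRinf (P : Measure (X × Y)) (r : EReal) (s : ℝ) : EReal :=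
  ⨅ (t : ℝ) (_ : 0 ≤ t), phiL P s t - divE t r

/-- `Θ_r(α)` for `r ∈ [1,∞]`. -/
def ThetaGe1 (P : Measure (X × Y)) (r : EReal) (α : ℝ) : EReal :=
  ⨅ (s : ℝ) (_ : α ≤ s), lce1 (phiRinf P r) s

/-- `φ_r(s) = sup_{t ≥ 0} (φ̄(s,t) - t/r)` for `r ∈ (0,1)`. -/
def phiSupR (P : Measure (X × Y)) (r : ℝ) (s : ℝ) : EReal :=
  ⨆ (t : ℝ) (_ : 0 ≤ t), phiU P s t - divE t (r : EReal)

/-- `φ_r(s)` for `r < 0`. -/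
def phiNeg (P : Measure (X × Y)) (r : ℝ) (s : ℝ) : EReal :=
  ⨆ (QX : Measure X) (_ : IsProbabilityMeasure QX) (_ : QX ≪ m1 P)
    (_ : KL QX (m1 P) = (s : EReal)),
    ⨅ (QY : Measure Y) (_ : IsProbabilityMeasure QY) (_ : QY ≪ m2 P),
      Dmin QX QY P - ediv (KL QY (m2 P)) r

/-- `φ_r(s)` for `r < 1`, `r ≠ 0`. -/
def phiLT1 (P : Measure (X × Y)) (r : ℝ) (s : ℝ) : EReal :=
  if 0 < r then phiSupR P r s else phiNeg P r s

/-- `Θ_r(α)` for `r < 1`, `r ≠ 0`. -/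
def ThetaLT1 (P : Measure (X × Y)) (r : ℝ) (α : ℝ) : EReal :=
  ⨆ (s : ℝ) (_ : 0 ≤ s) (_ : s ≤ α), uce1 (phiLT1 P r) s

/-- `α_max = sup {-log μ(A) : μ(A) > 0}`. -/
def alphaMax (μ : Measure X) : EReal :=
  ⨆ (A : Set X) (_ : MeasurableSet A) (_ : μ A ≠ 0), -elog (μ A)

/-! ### Entropies -/

/-- `Ent_{p,p}(f)`. -/
def entPP (P : Measure X) (f : X → ℝ) (p : ℝ) : EReal :=
  (((∫ x, f x ^ p * Real.log (f x ^ p) ∂P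
      - (∫ x, f x ^ p ∂P) * Real.log (∫ x, f x ^ p ∂P))
     / (∫ x, f x ^ p ∂P) : ℝ) : EReal)

/-- `Ent_{p,p̂}(f)` for a nonzero real `p` and a real `p̂`. -/
def ent (P : Measure X) (f : X → ℝ) (p phat : ℝ) : EReal :=
  if phat = p then entPP P f p
  else if phat = 0 then -elog (P {x | 0 < f x})
  else ((p * phat / (p - phat) : ℝ) : EReal) * (elog (rnorm P f p) - elog (rnorm P f phat))

/-- `Ent_{p,∞}(f)` for a nonzero real `p`. -/
def entTop (P : Measure X) (f : X → ℝ) (p : ℝ) : EReal :=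
  if rnormInf P f = ⊤ then (if 0 < p then ⊤ else ⊥)
  else ((-p : ℝ) : EReal) * (elog (rnorm P f p) - elog (rnormInf P f))

/-- `Ent_{p,p*}(f)` for a nonzero real `p` and `p* ∈ [0,∞]`. -/
def entE (P : Measure X) (f : X → ℝ) (p : ℝ) (ps : ℝ≥0∞) : EReal :=
  if ps = ⊤ then entTop P f p else ent P f p ps.toReal

/-- Admissible functions: measurable, nonnegative, not a.e. zero. -/
def Adm (P : Measure X) (f : X → ℝ) : Prop :=
  Measurable f ∧ (∀ x, 0 ≤ f x) ∧ ¬ f =ᵐ[P] (fun _ => 0)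

/-! ### Products -/

/-- `n`-fold product measure. -/
def piM (n : ℕ) (P : Measure X) : Measure (Fin n → X) := Measure.pi fun _ => P

def fstv {n : ℕ} (z : Fin n → X × Y) : Fin n → X := fun i => (z i).1
def sndv {n : ℕ} (z : Fin n → X × Y) : Fin n → Y := fun i => (z i).2

/-- `⟨f,g⟩ = ∫ f(xⁿ) g(yⁿ) dP^{⊗n}`. -/
def innerFG (P : Measure (X × Y)) (n : ℕ) (f : (Fin n → X) → ℝ) (g : (Fin n → Y) → ℝ) :
    ℝ≥0∞ :=
  ∫⁻ z, ENNReal.ofReal (f (fstv z)) * ENNReal.ofReal (g (sndv z)) ∂(piM n P)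

/-- The set `A × B` viewed inside `(X × Y)ⁿ`. -/
def prodSet {n : ℕ} (A : Set (Fin n → X)) (B : Set (Fin n → Y)) : Set (Fin n → X × Y) :=
  {z | fstv z ∈ A ∧ sndv z ∈ B}

/-! ### Kernels -/

/-- Product of kernel measures `⊗ᵢ κ(yᵢ)`. -/
def kpi {n : ℕ} (κ : Kernel Y X) (y : Fin n → Y) : Measure (Fin n → X) :=
  Measure.pi fun i => κ (y i)

/-- The conditional expectation operator `P_{X|Y}^{⊗n}(f)`. -/
def condOp {n : ℕ} (κ : Kernel Y X) (f : (Fin n → X) → ℝ) : (Fin n → Y) → ℝ≥0∞ :=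
  fun y => ∫⁻ x, ENNReal.ofReal (f x) ∂(kpi κ y)

/-- `κ` is a regular conditional probability of the first coordinate given the second. -/
def IsCondKernel (P : Measure (X × Y)) (κ : Kernel Y X) : Prop :=
  ∀ (A : Set X) (B : Set Y), MeasurableSet A → MeasurableSet B →
    P (A ×ˢ B) = ∫⁻ y in B, κ y A ∂(m2 P)

/-! ### η and `Λ̲*` -/

/-- The function `η_{p,p̂}(α,s)`. -/
def eta (p phat α : ℝ) (s : EReal) : EReal :=
  if 0 ≤ p ∧ 0 ≤ phat then max (ediv ((α : EReal) - s) p) (ediv ((α : EReal) - s) phat)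
  else if 0 < p ∧ phat < 0 then ediv ((α : EReal) - s) p
  else if 0 < phat ∧ p < 0 then ediv ((α : EReal) - s) phat
  else ⊥

/-- `Λ̲*_{p,q,p̂,q̂}(α,β)` (time sharing variable of size ≤ 4). -/
def LamLstar (P : Measure (X × Y)) (p q phat qhat α β : ℝ) : EReal :=
  ⨅ (w : Fin 4 → ℝ) (QX : Fin 4 → Measure X) (QY : Fin 4 → Measure Y)
    (_ : ∀ i, 0 ≤ w i) (_ : ∑ i, w i = 1)
    (_ : ∀ i, IsProbabilityMeasure (QX i)) (_ : ∀ i, QX i ≪ m1 P)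
    (_ : ∀ i, IsProbabilityMeasure (QY i)) (_ : ∀ i, QY i ≪ m2 P),
    (∑ i, (w i : EReal) * Dmin (QX i) (QY i) P)
      + eta p phat α (∑ i, (w i : EReal) * KL (QX i) (m1 P))
      + eta q qhat β (∑ i, (w i : EReal) * KL (QY i) (m2 P))

/-! ### Sub/supergradients (slopes in `[0,∞]`) -/

def IsSubgrad2 (F : ℝ → ℝ → EReal) (α β : ℝ) (u v : ℝ≥0∞) : Prop :=
  ∀ s t : ℝ, 0 ≤ s → 0 ≤ t →
    F α β + (u : EReal) * ((s - α : ℝ) : EReal) + (v : EReal) * ((t - β : ℝ) : EReal) ≤ F s t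

def IsSupergrad2 (F : ℝ → ℝ → EReal) (α β : ℝ) (u v : ℝ≥0∞) : Prop :=
  ∀ s t : ℝ, 0 ≤ s → 0 ≤ t →
    F s t ≤ F α β + (u : EReal) * ((s - α : ℝ) : EReal) + (v : EReal) * ((t - β : ℝ) : EReal)

def IsSubgrad1 (F : ℝ → EReal) (α : ℝ) (u : ℝ≥0∞) : Prop :=
  ∀ s : ℝ, 0 ≤ s → F α + (u : EReal) * ((s - α : ℝ) : EReal) ≤ F s

def IsSupergrad1 (F : ℝ → EReal) (α : ℝ) (u : ℝ≥0∞) : Prop :=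
  ∀ s : ℝ, 0 ≤ s → F s ≤ F α + (u : EReal) * ((s - α : ℝ) : EReal)

/-!
By duality the bound on `‖P_{X|Y}^{⊗n} f‖_q` is a two-function inequality
`∫ f(x)^a g(y)^θ dP ≤ C (∫ f dP_X)^a (∫ g dP_Y)^θ` with `θ = 1 - 1/q`, and by the Gibbs variational
principle the latter follows from the entropy inequality
`a D(Q_X‖P_X) + θ D(Q_Y‖P_Y) - D(Q‖P) ≤ log C` for all `Q`. Since
`Θ_{q'}(D(Q_X‖P_X)) ≤ D(Q‖P) - θ D(Q_Y‖P_Y)`, a subgradient `1/p*` of `Θ_{q'}` at `α` is such an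
entropy inequality with `a = 1/p*` and `log C = α/p* - Θ_{q'}(α)`. The two-function inequality
tensorizes, and the constraint on `Ent_{p,p*}(f)` converts `‖f‖_{p*}` into `‖f‖_p`.

When `p* = 0` the slope is infinite and `Θ_{q'} = ∞` beyond `α`. Then no event of positive
probability has `P_X`-measure below `e^{-α}`, and every `Q_X` living on an event of measure at most
`e^{-α}` satisfies `D(Q_X‖P_X) = α`; the entropy inequality thus holds for every `a`, for such `Q`
only. The corresponding two-function inequality concerns functions `f` of small support, and the
lower bound on the measure of events is what makes this restriction tensorize. When `p* = ∞` the
bound is just the contractivity of conditional expectations, since then `Θ_{q'}(α) ≤ Θ_{q'}(0) ≤ 0`.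
-/

open InformationTheory

/-! ### Relative entropy -/

section RelativeEntropy

variable {Ω : Type*} [MeasurableSpace Ω] {ρ μ : Measure Ω}

lemma toReal_klDiv_eq_integral [IsProbabilityMeasure ρ] [IsProbabilityMeasure μ] (h : ρ ≪ μ) :
    (klDiv ρ μ).toReal = ∫ x, llr ρ μ x ∂ρ :=
  toReal_klDiv_of_measure_eq h (by simp)

lemma KL_eq_toReal_klDiv [IsProbabilityMeasure ρ] [IsProbabilityMeasure μ] (h : klDiv ρ μ ≠ ∞) :
    KL ρ μ = ((klDiv ρ μ).toReal : EReal) := by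
  obtain ⟨hac, hint⟩ := klDiv_ne_top_iff.1 h
  rw [toReal_klDiv_eq_integral hac]
  exact if_pos ⟨hac, hint⟩

lemma lintegral_div_rnDeriv_le [SigmaFinite ρ] [SigmaFinite μ] (h : ρ ≪ μ) {f : Ω → ℝ≥0∞}
    (hf : Measurable f) : ∫⁻ x, f x / ρ.rnDeriv μ x ∂ρ ≤ ∫⁻ x, f x ∂μ := by
  rw [← lintegral_rnDeriv_mul h (by fun_prop)]
  exact lintegral_mono fun x => ENNReal.mul_div_le

theorem ofReal_exp_integral_log_sub_klDiv_le [IsProbabilityMeasure ρ] [IsProbabilityMeasure μ]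
    (hρ : klDiv ρ μ ≠ ∞) {f : Ω → ℝ≥0∞} (hf : Measurable f) (hf0 : ∀ᵐ x ∂ρ, f x ≠ 0)
    (hlog : Integrable (fun x => Real.log (f x).toReal) ρ) :
    ENNReal.ofReal (Real.exp (∫ x, Real.log (f x).toReal ∂ρ - (klDiv ρ μ).toReal))
      ≤ ∫⁻ x, f x ∂μ := by
  rcases eq_or_ne (∫⁻ x, f x ∂μ) ∞ with hfi | hfi
  · simp [hfi]
  obtain ⟨hac, hint⟩ := klDiv_ne_top_iff.1 hρ
  set u : Ω → ℝ := fun x => Real.log (f x).toReal - llr ρ μ x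
  set r : Ω → ℝ≥0∞ := fun x => f x / ρ.rnDeriv μ x
  have hu : ∫ x, u x ∂ρ = ∫ x, Real.log (f x).toReal ∂ρ - (klDiv ρ μ).toReal := by
    rw [toReal_klDiv_eq_integral hac, ← integral_sub hlog hint]
  have hexp : (fun x => Real.exp (u x)) =ᵐ[ρ] fun x => (r x).toReal := by
    filter_upwards [hf0, hac.ae_le (ae_lt_top hf hfi), exp_llr_of_ac ρ μ hac]
      with x hx0 hx hr
    rw [Real.exp_sub, hr, Real.exp_log (ENNReal.toReal_pos hx0 hx.ne), ENNReal.toReal_div]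
  have hr : Measurable r := hf.div (Measure.measurable_rnDeriv ρ μ)
  have hrle : ∫⁻ x, r x ∂ρ ≤ ∫⁻ x, f x ∂μ := lintegral_div_rnDeriv_le hac hf
  have hrfin : ∫⁻ x, r x ∂ρ ≠ ∞ := ne_top_of_le_ne_top hfi hrle
  rw [← hu]
  calc ENNReal.ofReal (Real.exp (∫ x, u x ∂ρ))
      ≤ ENNReal.ofReal (∫ x, Real.exp (u x) ∂ρ) := by
        refine ENNReal.ofReal_le_ofReal <| convexOn_exp.map_integral_le
          Real.continuous_exp.continuousOn isClosed_univ (by simp) (hlog.sub hint) ?_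
        exact (integrable_congr hexp).2
          (integrable_toReal_of_lintegral_ne_top hr.aemeasurable hrfin)
    _ = ∫⁻ x, r x ∂ρ := by
      rw [integral_congr_ae hexp, integral_toReal hr.aemeasurable (ae_lt_top hr hrfin),
        ENNReal.ofReal_toReal hrfin]
    _ ≤ ∫⁻ x, f x ∂μ := hrle

theorem ofReal_exp_mul_integral_log_sub_klDiv_le [IsProbabilityMeasure ρ]
    [IsProbabilityMeasure μ] (hρ : klDiv ρ μ ≠ ∞) {f : Ω → ℝ≥0∞} (hf : Measurable f) {a : ℝ}
    (ha : 0 ≤ a) (hf0 : ∀ᵐ x ∂ρ, f x ^ a ≠ 0)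
    (hlog : Integrable (fun x => Real.log (f x).toReal) ρ) :
    ENNReal.ofReal (Real.exp (a * (∫ x, Real.log (f x).toReal ∂ρ - (klDiv ρ μ).toReal)))
      ≤ (∫⁻ x, f x ∂μ) ^ a := by
  rcases ha.eq_or_lt with rfl | ha
  · simp
  · have hf0' : ∀ᵐ x ∂ρ, f x ≠ 0 := hf0.mono fun x hx h => hx (by simp [h, ha])
    rw [mul_comm, Real.exp_mul, ← ENNReal.ofReal_rpow_of_pos (Real.exp_pos _)]
    exact ENNReal.rpow_le_rpow (ofReal_exp_integral_log_sub_klDiv_le hρ hf hf0' hlog) ha.le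

lemma ofReal_exp_neg_klDiv_le_measure [IsProbabilityMeasure ρ] [IsProbabilityMeasure μ]
    (hρ : klDiv ρ μ ≠ ∞) {A : Set Ω} (hA : MeasurableSet A) (hAρ : ρ Aᶜ = 0) :
    ENNReal.ofReal (Real.exp (-(klDiv ρ μ).toReal)) ≤ μ A := by
  have hmem : ∀ᵐ x ∂ρ, x ∈ A := mem_ae_iff.2 hAρ
  have hlog : (fun x => Real.log (A.indicator (1 : Ω → ℝ≥0∞) x).toReal) = 0 := by
    ext x
    by_cases hx : x ∈ A <;> simp [hx]
  have h := ofReal_exp_integral_log_sub_klDiv_le hρ (measurable_one.indicator hA)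
    (hmem.mono fun x hx => by simp [hx]) (hlog ▸ integrable_zero _ _ _)
  simpa [hlog, lintegral_indicator_one hA] using h

lemma le_toReal_klDiv_of_measure_le [IsProbabilityMeasure ρ] [IsProbabilityMeasure μ]
    (hρ : klDiv ρ μ ≠ ∞) {A : Set Ω} (hA : MeasurableSet A) (hAρ : ρ Aᶜ = 0) {s : ℝ}
    (hs : μ A ≤ ENNReal.ofReal (Real.exp (-s))) : s ≤ (klDiv ρ μ).toReal := by
  have h := (ofReal_exp_neg_klDiv_le_measure hρ hA hAρ).trans hs
  rwa [ENNReal.ofReal_le_ofReal_iff (Real.exp_pos _).le, Real.exp_le_exp, neg_le_neg_iff] at h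

section WithDensity

variable {h : Ω → ℝ≥0∞}

lemma isProbabilityMeasure_withDensity_div (h0 : ∫⁻ x, h x ∂μ ≠ 0) (hi : ∫⁻ x, h x ∂μ ≠ ∞) :
    IsProbabilityMeasure (μ.withDensity fun x => h x / ∫⁻ x, h x ∂μ) := by
  refine ⟨?_⟩
  rw [withDensity_apply _ MeasurableSet.univ, Measure.restrict_univ]
  simp only [div_eq_mul_inv]
  rw [lintegral_mul_const' _ _ (ENNReal.inv_ne_top.2 h0), ENNReal.mul_inv_cancel h0 hi]

lemma ae_withDensity_div_ne_zero (hm : Measurable h) :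
    ∀ᵐ x ∂μ.withDensity (fun x => h x / ∫⁻ x, h x ∂μ), h x ≠ 0 := by
  rw [ae_withDensity_iff (hm.div_const _)]
  exact ae_of_all _ fun x hx h0 => hx (by simp [h0])

lemma llr_withDensity_div [SigmaFinite μ] (hm : Measurable h) (h0 : ∫⁻ x, h x ∂μ ≠ 0)
    (hi : ∫⁻ x, h x ∂μ ≠ ∞) :
    llr (μ.withDensity fun x => h x / ∫⁻ x, h x ∂μ) μ
      =ᵐ[μ.withDensity fun x => h x / ∫⁻ x, h x ∂μ]
        fun x => Real.log (h x).toReal - Real.log (∫⁻ x, h x ∂μ).toReal := by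
  have hac := withDensity_absolutelyContinuous μ fun x => h x / ∫⁻ x, h x ∂μ
  filter_upwards [hac.ae_le (Measure.rnDeriv_withDensity μ (hm.div_const _)),
    hac.ae_le (ae_lt_top hm hi), ae_withDensity_div_ne_zero hm] with x hx hfin hx0
  rw [llr, hx, ENNReal.toReal_div, Real.log_div (ENNReal.toReal_pos hx0 hfin.ne).ne'
    (ENNReal.toReal_pos h0 hi).ne']

theorem klDiv_withDensity_div_ne_top [IsProbabilityMeasure μ] (hm : Measurable h)
    (h0 : ∫⁻ x, h x ∂μ ≠ 0) (hi : ∫⁻ x, h x ∂μ ≠ ∞)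
    (hlog : Integrable (fun x => Real.log (h x).toReal)
      (μ.withDensity fun x => h x / ∫⁻ x, h x ∂μ)) :
    klDiv (μ.withDensity fun x => h x / ∫⁻ x, h x ∂μ) μ ≠ ∞ := by
  have := isProbabilityMeasure_withDensity_div h0 hi
  exact klDiv_ne_top (withDensity_absolutelyContinuous _ _)
    ((integrable_congr (llr_withDensity_div hm h0 hi)).2 (hlog.sub (integrable_const _)))

theorem ofReal_exp_integral_log_sub_klDiv_withDensity [IsProbabilityMeasure μ]
    (hm : Measurable h) (h0 : ∫⁻ x, h x ∂μ ≠ 0) (hi : ∫⁻ x, h x ∂μ ≠ ∞)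
    (hlog : Integrable (fun x => Real.log (h x).toReal)
      (μ.withDensity fun x => h x / ∫⁻ x, h x ∂μ)) :
    ENNReal.ofReal (Real.exp
      (∫ x, Real.log (h x).toReal ∂(μ.withDensity fun x => h x / ∫⁻ x, h x ∂μ)
        - (klDiv (μ.withDensity fun x => h x / ∫⁻ x, h x ∂μ) μ).toReal)) = ∫⁻ x, h x ∂μ := by
  have := isProbabilityMeasure_withDensity_div h0 hi
  rw [toReal_klDiv_eq_integral (withDensity_absolutelyContinuous _ _),
    integral_congr_ae (llr_withDensity_div hm h0 hi), integral_sub hlog (integrable_const _)]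
  simp only [integral_const, probReal_univ, one_smul, sub_sub_cancel]
  rw [Real.exp_log (ENNReal.toReal_pos h0 hi), ENNReal.ofReal_toReal hi]

end WithDensity

end RelativeEntropy

/-! ### Upper bounds on `Θ` -/

section Theta

variable {P : Measure (X × Y)}

instance [IsProbabilityMeasure P] : IsProbabilityMeasure (m1 P) :=
  Measure.isProbabilityMeasure_map measurable_fst.aemeasurable

instance [IsProbabilityMeasure P] : IsProbabilityMeasure (m2 P) :=
  Measure.isProbabilityMeasure_map measurable_snd.aemeasurable

lemma lce1_le (F : ℝ → EReal) {a : ℝ} (ha : 0 ≤ a) : lce1 F a ≤ F a := by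
  refine (iInf₂_le (Pi.single 0 1) fun _ => a).trans ?_
  refine (iInf₂_le (fun i => ?_) (by simp)).trans <|
    (iInf₂_le (fun _ => ha) (by simp [Pi.single_apply])).trans ?_
  · by_cases hi : i = 0 <;> simp [hi]
  · simp [Fin.sum_univ_three, Pi.single_apply]

lemma divE_conj {q : ℝ} (hq : 1 ≤ q) (t : ℝ) :
    divE t (conj q) = (((1 - 1 / q) * t : ℝ) : EReal) := by
  unfold divE conj
  split_ifs with h1 h2 h2
  · simp [h1]
  · simp at h2
  · simp at h2
  · rw [EReal.toReal_coe, one_sub_div (by linarith : q ≠ 0), div_div_eq_mul_div]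
    ring_nf

lemma klDiv_m1_ne_top [IsFiniteMeasure P] {π : Measure (X × Y)} [IsFiniteMeasure π]
    (hπ : klDiv π P ≠ ∞) : klDiv (m1 π) (m1 P) ≠ ∞ :=
  ne_top_of_le_ne_top hπ (klDiv_map_le π P measurable_fst)

lemma klDiv_m2_ne_top [IsFiniteMeasure P] {π : Measure (X × Y)} [IsFiniteMeasure π]
    (hπ : klDiv π P ≠ ∞) : klDiv (m2 π) (m2 P) ≠ ∞ :=
  ne_top_of_le_ne_top hπ (klDiv_map_le π P measurable_snd)

theorem ThetaGe1_conj_le [IsProbabilityMeasure P] {q : ℝ} (hq : 1 ≤ q) {π : Measure (X × Y)}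
    [IsProbabilityMeasure π] (hπ : klDiv π P ≠ ∞) {s : ℝ}
    (hs : s ≤ (klDiv (m1 π) (m1 P)).toReal) :
    ThetaGe1 P (conj q) s ≤
      (((klDiv π P).toReal - (1 - 1 / q) * (klDiv (m2 π) (m2 P)).toReal : ℝ) : EReal) := by
  have h1 := klDiv_m1_ne_top hπ
  have h2 := klDiv_m2_ne_top hπ
  refine (iInf₂_le (klDiv (m1 π) (m1 P)).toReal hs).trans <|
    (lce1_le _ ENNReal.toReal_nonneg).trans <|
    (iInf₂_le (klDiv (m2 π) (m2 P)).toReal ENNReal.toReal_nonneg).trans ?_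
  rw [divE_conj hq, EReal.coe_sub]
  refine EReal.sub_le_sub ?_ le_rfl
  calc phiL P (klDiv (m1 π) (m1 P)).toReal (klDiv (m2 π) (m2 P)).toReal
      ≤ Dmin (m1 π) (m2 π) P :=
        (iInf₂_le (m1 π) (m2 π)).trans <|
        (iInf₂_le (by infer_instance) (by infer_instance)).trans <|
        (iInf₂_le (klDiv_ne_top_iff.1 h1).1 (klDiv_ne_top_iff.1 h2).1).trans <|
        iInf₂_le (KL_eq_toReal_klDiv h1) (KL_eq_toReal_klDiv h2)
    _ ≤ KL π P := iInf₂_le π ⟨inferInstance, rfl, rfl⟩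
    _ = _ := KL_eq_toReal_klDiv hπ

lemma ThetaGe1_conj_zero_le [IsProbabilityMeasure P] {q : ℝ} (hq : 1 ≤ q) :
    ThetaGe1 P (conj q) 0 ≤ 0 := by
  have h := ThetaGe1_conj_le hq (P := P) (π := P) (s := 0) (by simp) ENNReal.toReal_nonneg
  simpa [klDiv_self] using h

lemma ThetaGe1_conj_ne_top [IsProbabilityMeasure P] {q : ℝ} (hq : 1 ≤ q) {A : Set X}
    (hA : MeasurableSet A) (h0 : m1 P A ≠ 0) {s : ℝ}
    (hs : m1 P A ≤ ENNReal.ofReal (Real.exp (-s))) : ThetaGe1 P (conj q) s ≠ ⊤ := by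
  set h : X × Y → ℝ≥0∞ := (Prod.fst ⁻¹' A).indicator 1
  have hm : Measurable h := measurable_one.indicator (measurable_fst hA)
  have hint : ∫⁻ z, h z ∂P = m1 P A := by
    rw [lintegral_indicator_one (measurable_fst hA), m1, Measure.map_apply measurable_fst hA]
  have hZ : ∫⁻ z, h z ∂P ≠ ∞ := hint ▸ measure_ne_top _ _
  rw [← hint] at h0
  set π := P.withDensity fun z => h z / ∫⁻ z, h z ∂P
  have hπ : IsProbabilityMeasure π := isProbabilityMeasure_withDensity_div h0 hZ
  have hlog : (fun z => Real.log (h z).toReal) = 0 := by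
    ext z
    by_cases hz : z ∈ (Prod.fst ⁻¹' A : Set (X × Y)) <;> simp [h, hz]
  have hfin : klDiv π P ≠ ∞ :=
    klDiv_withDensity_div_ne_top hm h0 hZ (hlog ▸ integrable_zero _ _ _)
  have hsupp : m1 π Aᶜ = 0 := by
    rw [m1, Measure.map_apply measurable_fst hA.compl]
    refine mem_ae_iff.1 ((ae_withDensity_div_ne_zero hm).mono fun z hz => ?_)
    by_contra hzA
    exact hz (indicator_of_notMem (s := Prod.fst ⁻¹' A) hzA 1)
  have hD : s ≤ (klDiv (m1 π) (m1 P)).toReal :=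
    le_toReal_klDiv_of_measure_le (klDiv_m1_ne_top hfin) hA hsupp hs
  exact ne_top_of_le_ne_top (EReal.coe_ne_top _) (ThetaGe1_conj_le hq hfin hD)

end Theta

/-! ### The single-letter inequality -/

section SingleLetter

variable {P : Measure (X × Y)} {a θ L : ℝ} {c : ℝ≥0∞}

/-- The entropic form of a Brascamp--Lieb inequality with exponents `a`, `θ` and constant `exp L`,
restricted to the laws whose first marginal lives on a set of `m1 P`-measure at most `c`. -/
def EntropyIneq (P : Measure (X × Y)) (a θ L : ℝ) (c : ℝ≥0∞) : Prop :=
  ∀ π : Measure (X × Y), IsProbabilityMeasure π → klDiv π P ≠ ∞ →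
    (∃ A, MeasurableSet A ∧ m1 P A ≤ c ∧ m1 π Aᶜ = 0) →
    a * (klDiv (m1 π) (m1 P)).toReal + θ * (klDiv (m2 π) (m2 P)).toReal - (klDiv π P).toReal ≤ L

/-- The Brascamp--Lieb inequality for `P` with exponents `a`, `θ` and constant `C`, restricted to
the functions `f` whose support has `m1 P`-measure at most `c`. -/
def BrascampLieb (P : Measure (X × Y)) (a θ : ℝ) (c C : ℝ≥0∞) : Prop :=
  ∀ (f : X → ℝ≥0∞) (g : Y → ℝ≥0∞), Measurable f → Measurable g → m1 P {x | f x ≠ 0} ≤ c →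
    ∫⁻ z, f z.1 ^ a * g z.2 ^ θ ∂P ≤ C * ((∫⁻ x, f x ∂m1 P) ^ a * (∫⁻ y, g y ∂m2 P) ^ θ)

lemma log_toReal_rpow {a : ℝ} (ha : 0 ≤ a) (t : ℝ≥0∞) :
    Real.log (t ^ a).toReal = a * Real.log t.toReal := by
  rw [← ENNReal.toReal_rpow]
  rcases ENNReal.toReal_nonneg.eq_or_lt with h | h
  · rcases ha.eq_or_lt with rfl | ha
    · simp
    · rw [← h, Real.zero_rpow ha.ne', Real.log_zero, mul_zero]
  · exact Real.log_rpow h a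

lemma integrable_log_simpleFunc {Ω : Type*} [MeasurableSpace Ω] (μ : Measure Ω)
    [IsFiniteMeasure μ] (f : SimpleFunc Ω ℝ≥0∞) :
    Integrable (fun x => Real.log (f x).toReal) μ :=
  (f.map fun t : ℝ≥0∞ => Real.log t.toReal).integrable_of_isFiniteMeasure

lemma integral_log_rpow_mul_rpow {π : Measure (X × Y)} [IsProbabilityMeasure π] (ha : 0 ≤ a)
    (hθ : 0 ≤ θ) (f : SimpleFunc X ℝ≥0∞) (g : SimpleFunc Y ℝ≥0∞)
    (h0 : ∀ᵐ z ∂π, f z.1 ^ a * g z.2 ^ θ ≠ 0) (hi : ∀ᵐ z ∂π, f z.1 ^ a * g z.2 ^ θ ≠ ∞) :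
    ∫ z, Real.log (f z.1 ^ a * g z.2 ^ θ).toReal ∂π
      = a * ∫ x, Real.log (f x).toReal ∂m1 π + θ * ∫ y, Real.log (g y).toReal ∂m2 π := by
  have hlog : (fun z => Real.log (f z.1 ^ a * g z.2 ^ θ).toReal) =ᵐ[π]
      fun z => a * Real.log (f z.1).toReal + θ * Real.log (g z.2).toReal := by
    filter_upwards [h0, hi] with z hz hz'
    have hne := ENNReal.toReal_ne_zero.2 ⟨hz, hz'⟩
    rw [ENNReal.toReal_mul] at hne ⊢
    rw [Real.log_mul (left_ne_zero_of_mul hne) (right_ne_zero_of_mul hne),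
      log_toReal_rpow ha, log_toReal_rpow hθ]
  have hf := integrable_log_simpleFunc (m1 π) f
  have hg := integrable_log_simpleFunc (m2 π) g
  have hf' := integral_map measurable_fst.aemeasurable hf.aestronglyMeasurable
  have hg' := integral_map measurable_snd.aemeasurable hg.aestronglyMeasurable
  have hsum := integral_add ((hf.comp_measurable measurable_fst).const_mul a)
    ((hg.comp_measurable measurable_snd).const_mul θ)
  rw [integral_const_mul, integral_const_mul] at hsum
  rw [m1, m2, hf', hg', integral_congr_ae hlog]
  exact hsum

lemma EntropyIneq.ofReal_exp_integral_log_sub_klDiv_le [IsProbabilityMeasure P]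
    (hE : EntropyIneq P a θ L c) (ha : 0 < a) (hθ : 0 ≤ θ) (f : SimpleFunc X ℝ≥0∞)
    (g : SimpleFunc Y ℝ≥0∞) (hc : m1 P {x | f x ≠ 0} ≤ c) {π : Measure (X × Y)}
    [IsProbabilityMeasure π] (hπ : klDiv π P ≠ ∞)
    (h0 : ∀ᵐ z ∂π, f z.1 ^ a * g z.2 ^ θ ≠ 0) (hi : ∀ᵐ z ∂π, f z.1 ^ a * g z.2 ^ θ ≠ ∞) :
    ENNReal.ofReal (Real.exp
        (∫ z, Real.log (f z.1 ^ a * g z.2 ^ θ).toReal ∂π - (klDiv π P).toReal))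
      ≤ ENNReal.ofReal (Real.exp L) * ((∫⁻ x, f x ∂m1 P) ^ a * (∫⁻ y, g y ∂m2 P) ^ θ) := by
  have hf0 : ∀ᵐ x ∂m1 π, f x ^ a ≠ 0 :=
    (ae_map_iff (by fun_prop) (by measurability)).2 (h0.mono fun z hz => left_ne_zero_of_mul hz)
  have hg0 : ∀ᵐ y ∂m2 π, g y ^ θ ≠ 0 :=
    (ae_map_iff (by fun_prop) (by measurability)).2 (h0.mono fun z hz => right_ne_zero_of_mul hz)
  have hsupp : m1 π {x | f x ≠ 0}ᶜ = 0 :=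
    mem_ae_iff.1 (hf0.mono fun x hx hx0 => hx (by simp [hx0, ha]))
  have hD := hE π inferInstance hπ ⟨_, by measurability, hc, hsupp⟩
  have hF := ofReal_exp_mul_integral_log_sub_klDiv_le (klDiv_m1_ne_top hπ) f.measurable ha.le
    hf0 (integrable_log_simpleFunc _ f)
  have hG := ofReal_exp_mul_integral_log_sub_klDiv_le (klDiv_m2_ne_top hπ) g.measurable hθ
    hg0 (integrable_log_simpleFunc _ g)
  refine le_trans ?_ (mul_le_mul_right (mul_le_mul' hF hG) _)
  rw [integral_log_rpow_mul_rpow ha.le hθ f g h0 hi, ← ENNReal.ofReal_mul (Real.exp_nonneg _),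
    ← ENNReal.ofReal_mul (Real.exp_nonneg _), ← Real.exp_add, ← Real.exp_add]
  refine ENNReal.ofReal_le_ofReal (Real.exp_le_exp.2 ?_)
  linarith

lemma EntropyIneq.lintegral_simpleFunc_le [IsProbabilityMeasure P]
    (hE : EntropyIneq P a θ L c) (ha : 0 < a) (hθ : 0 ≤ θ) (f : SimpleFunc X ℝ≥0∞)
    (g : SimpleFunc Y ℝ≥0∞) (hf : ∀ x, f x ≠ ∞) (hg : ∀ y, g y ≠ ∞)
    (hc : m1 P {x | f x ≠ 0} ≤ c) :
    ∫⁻ z, f z.1 ^ a * g z.2 ^ θ ∂P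
      ≤ ENNReal.ofReal (Real.exp L) * ((∫⁻ x, f x ∂m1 P) ^ a * (∫⁻ y, g y ∂m2 P) ^ θ) := by
  set h : SimpleFunc (X × Y) ℝ≥0∞ := ((f.comp Prod.fst measurable_fst).map (· ^ a)) *
    (g.comp Prod.snd measurable_snd).map (· ^ θ)
  change ∫⁻ z, h z ∂P ≤ _
  have hfin (z : X × Y) : h z ≠ ∞ := ENNReal.mul_ne_top
    (ENNReal.rpow_ne_top_of_nonneg ha.le (hf _)) (ENNReal.rpow_ne_top_of_nonneg hθ (hg _))
  rcases eq_or_ne (∫⁻ z, h z ∂P) 0 with h0 | h0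
  · simp [h0]
  have hi : ∫⁻ z, h z ∂P ≠ ∞ := by
    rw [SimpleFunc.lintegral_eq_lintegral]
    exact ((SimpleFunc.finMeasSupp_iff_support.2 (measure_lt_top _ _)).lintegral_lt_top
      (ae_of_all _ hfin)).ne
  set π := P.withDensity fun z => h z / ∫⁻ z, h z ∂P
  have hπ : IsProbabilityMeasure π := isProbabilityMeasure_withDensity_div h0 hi
  have hlog := integrable_log_simpleFunc π h
  rw [← ofReal_exp_integral_log_sub_klDiv_withDensity h.measurable h0 hi hlog]
  exact hE.ofReal_exp_integral_log_sub_klDiv_le ha hθ f g hc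
    (klDiv_withDensity_div_ne_top h.measurable h0 hi hlog)
    (ae_withDensity_div_ne_zero h.measurable) (ae_of_all _ hfin)

lemma ennreal_iSup_rpow {ι : Type*} [Nonempty ι] (u : ι → ℝ≥0∞) (ha : 0 ≤ a) :
    (⨆ i, u i) ^ a = ⨆ i, u i ^ a :=
  (ENNReal.monotone_rpow_of_nonneg ha).map_ciSup_of_continuousAt
    ENNReal.continuous_rpow_const.continuousAt (OrderTop.bddAbove _)

lemma iSup_rpow_mul_iSup_rpow_le {u v : ℕ → ℝ≥0∞} (hu : Monotone u) (hv : Monotone v)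
    (ha : 0 ≤ a) (hθ : 0 ≤ θ) :
    (⨆ n, u n) ^ a * (⨆ n, v n) ^ θ ≤ ⨆ n, u n ^ a * v n ^ θ := by
  rw [ennreal_iSup_rpow u ha, ennreal_iSup_rpow v hθ]
  simp only [ENNReal.iSup_mul, ENNReal.mul_iSup]
  refine iSup₂_le fun j i => le_iSup_of_le (max i j) ?_
  gcongr
  · exact hu (le_max_left i j)
  · exact hv (le_max_right i j)

theorem EntropyIneq.brascampLieb [IsProbabilityMeasure P] (hE : EntropyIneq P a θ L c)
    (ha : 0 < a) (hθ : 0 ≤ θ) : BrascampLieb P a θ c (ENNReal.ofReal (Real.exp L)) := by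
  intro f g hf hg hc
  set F := SimpleFunc.eapprox f
  set G := SimpleFunc.eapprox g
  have hF : Monotone F := SimpleFunc.monotone_eapprox f
  have hG : Monotone G := SimpleFunc.monotone_eapprox g
  have hFf (n : ℕ) (x : X) : F n x ≤ f x :=
    (le_iSup (fun n => F n x) n).trans_eq (SimpleFunc.iSup_eapprox_apply hf x)
  have hGg (n : ℕ) (y : Y) : G n y ≤ g y :=
    (le_iSup (fun n => G n y) n).trans_eq (SimpleFunc.iSup_eapprox_apply hg y)
  have happrox (z : X × Y) : f z.1 ^ a * g z.2 ^ θ ≤ ⨆ n, F n z.1 ^ a * G n z.2 ^ θ := by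
    rw [← SimpleFunc.iSup_eapprox_apply hf, ← SimpleFunc.iSup_eapprox_apply hg]
    exact iSup_rpow_mul_iSup_rpow_le (fun _ _ h => hF h _) (fun _ _ h => hG h _) ha.le hθ
  refine (lintegral_mono happrox).trans ?_
  rw [lintegral_iSup (fun n => by fun_prop) fun m n hmn z => by
    dsimp only
    gcongr
    exacts [hF hmn _, hG hmn _]]
  refine iSup_le fun n => ?_
  have hsupp : m1 P {x | F n x ≠ 0} ≤ c :=
    (measure_mono fun x (hx : F n x ≠ 0) (hfx : f x = 0) =>
      hx (le_zero_iff.1 ((hFf n x).trans_eq hfx))).trans hc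
  refine (hE.lintegral_simpleFunc_le ha hθ (F n) (G n)
    (fun x => (SimpleFunc.eapprox_lt_top f n x).ne)
    (fun y => (SimpleFunc.eapprox_lt_top g n y).ne) hsupp).trans ?_
  gcongr with x y
  exacts [hFf n x, hGg n y]

end SingleLetter

/-! ### Tensorization -/

section MassFloor

variable {X₁ X₂ : Type*} [MeasurableSpace X₁] [MeasurableSpace X₂]
  {μ : Measure X} {μ₁ : Measure X₁} {μ₂ : Measure X₂} {c c₁ c₂ : ℝ≥0∞}

/-- `μ` has no non-null event of measure less than `c`. This gap is what lets a `BrascampLieb`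
inequality restricted to functions of small support tensorize. -/
def HasMassFloor (μ : Measure X) (c : ℝ≥0∞) : Prop :=
  ∀ A, MeasurableSet A → μ A ≠ 0 → c ≤ μ A

lemma HasMassFloor.map (h : HasMassFloor μ c) {e : X → X₁} (he : Measurable e) :
    HasMassFloor (μ.map e) c := by
  intro A hA h0
  rw [Measure.map_apply he hA] at h0 ⊢
  exact h _ (he hA) h0

lemma HasMassFloor.indicator_le (h₂ : HasMassFloor μ₂ c₂) {S : Set (X₁ × X₂)}
    (hS : MeasurableSet S) (x : X₁) :
    {x | μ₂ (Prod.mk x ⁻¹' S) ≠ 0}.indicator (fun _ => c₂) x ≤ μ₂ (Prod.mk x ⁻¹' S) :=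
  indicator_apply_le' (fun hx => h₂ _ (measurable_prodMk_left hS) hx) fun _ => zero_le

lemma measurableSet_slice_ne_zero [SFinite μ₂] {S : Set (X₁ × X₂)} (hS : MeasurableSet S) :
    MeasurableSet {x | μ₂ (Prod.mk x ⁻¹' S) ≠ 0} :=
  (measurable_measure_prodMk_left hS (measurableSet_singleton 0)).compl

lemma HasMassFloor.mul_measure_slice_le_prod [SFinite μ₂] (h₂ : HasMassFloor μ₂ c₂)
    {S : Set (X₁ × X₂)} (hS : MeasurableSet S) :
    c₂ * μ₁ {x | μ₂ (Prod.mk x ⁻¹' S) ≠ 0} ≤ μ₁.prod μ₂ S := by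
  rw [Measure.prod_apply hS, ← lintegral_indicator_const (measurableSet_slice_ne_zero hS)]
  exact lintegral_mono (h₂.indicator_le hS)

lemma HasMassFloor.prod [SFinite μ₂] (h₁ : HasMassFloor μ₁ c₁) (h₂ : HasMassFloor μ₂ c₂) :
    HasMassFloor (μ₁.prod μ₂) (c₁ * c₂) := by
  intro S hS h0
  refine le_trans ?_ (h₂.mul_measure_slice_le_prod hS)
  rw [mul_comm]
  gcongr
  refine h₁ _ (measurableSet_slice_ne_zero hS) fun hB => h0 ?_
  exact (Measure.measure_prod_null hS).2 (ae_iff.2 hB)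

lemma HasMassFloor.ae_slice_le [IsFiniteMeasure μ₁] [SFinite μ₂] (h₁ : HasMassFloor μ₁ c₁)
    (h₂ : HasMassFloor μ₂ c₂) (hc₂ : c₂ ≠ ∞) {S : Set (X₁ × X₂)} (hS : MeasurableSet S)
    (hSc : μ₁.prod μ₂ S ≤ c₁ * c₂) : ∀ᵐ x ∂μ₁, μ₂ (Prod.mk x ⁻¹' S) ≤ c₂ := by
  have hB := measurableSet_slice_ne_zero (μ₂ := μ₂) hS
  by_cases h0 : μ₁ {x | μ₂ (Prod.mk x ⁻¹' S) ≠ 0} = 0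
  · filter_upwards [ae_iff.2 h0] with x hx
    exact hx.trans_le zero_le
  have hint := lintegral_indicator_const (μ := μ₁) hB c₂
  have heq := ae_eq_of_ae_le_of_lintegral_le (ae_of_all μ₁ (h₂.indicator_le hS))
    (hint ▸ ENNReal.mul_ne_top hc₂ (measure_ne_top _ _))
    (measurable_measure_prodMk_left hS).aemeasurable <| by
      rw [hint, ← Measure.prod_apply hS, mul_comm]
      exact hSc.trans (mul_le_mul_left (h₁ _ hB h0) _)
  filter_upwards [heq] with x hx
  exact hx ▸ indicator_le_self' (fun _ _ => zero_le) x

end MassFloor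

section Tensorization

variable {X₁ X₂ Y₁ Y₂ : Type*} [MeasurableSpace X₁] [MeasurableSpace X₂] [MeasurableSpace Y₁]
  [MeasurableSpace Y₂] {a θ : ℝ} {c c₁ c₂ C C₁ C₂ : ℝ≥0∞}

/-- The joint law of `((x₁, x₂), (y₁, y₂))` for independent pairs `(xᵢ, yᵢ)` of law `Pᵢ`,
i.e. the product of two joint laws, read again as a joint law. -/
def pairProd (P₁ : Measure (X₁ × Y₁)) (P₂ : Measure (X₂ × Y₂)) :
    Measure ((X₁ × X₂) × (Y₁ × Y₂)) :=
  (P₁.prod P₂).map fun z => ((z.1.1, z.2.1), (z.1.2, z.2.2))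

/-- The joint law of `(xⁿ, yⁿ)` for `n` independent pairs `(xᵢ, yᵢ)` of law `P`. -/
def pairPow (n : ℕ) (P : Measure (X × Y)) : Measure ((Fin n → X) × (Fin n → Y)) :=
  (piM n P).map fun z => (fstv z, sndv z)

lemma m1_map_prodMap (P : Measure (X₁ × Y₁)) {e : X₁ → X₂} {e' : Y₁ → Y₂} (he : Measurable e)
    (he' : Measurable e') : m1 (P.map (Prod.map e e')) = (m1 P).map e := by
  rw [m1, m1, Measure.map_map measurable_fst (by fun_prop), Measure.map_map he measurable_fst]
  rfl

lemma m2_map_prodMap (P : Measure (X₁ × Y₁)) {e : X₁ → X₂} {e' : Y₁ → Y₂} (he : Measurable e)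
    (he' : Measurable e') : m2 (P.map (Prod.map e e')) = (m2 P).map e' := by
  rw [m2, m2, Measure.map_map measurable_snd (by fun_prop), Measure.map_map he' measurable_snd]
  rfl

lemma BrascampLieb.map {P : Measure (X₁ × Y₁)} (h : BrascampLieb P a θ c C) {e : X₁ → X₂}
    {e' : Y₁ → Y₂} (he : Measurable e) (he' : Measurable e') :
    BrascampLieb (P.map (Prod.map e e')) a θ c C := by
  intro f g hf hg hc
  rw [m1_map_prodMap P he he', Measure.map_apply he (by measurability)] at hc
  rw [m1_map_prodMap P he he', m2_map_prodMap P he he', lintegral_map hf he, lintegral_map hg he',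
    lintegral_map (by fun_prop) (by fun_prop)]
  exact h (f ∘ e) (g ∘ e') (hf.comp he) (hg.comp he') hc

section PairProd

variable (P₁ : Measure (X₁ × Y₁)) (P₂ : Measure (X₂ × Y₂)) [SFinite P₂]

lemma m1_pairProd [SFinite P₁] : m1 (pairProd P₁ P₂) = (m1 P₁).prod (m1 P₂) := by
  rw [pairProd, m1, m1, m1, Measure.map_map measurable_fst (by fun_prop),
    Measure.map_prod_map _ _ measurable_fst measurable_fst]
  rfl

lemma m2_pairProd [SFinite P₁] : m2 (pairProd P₁ P₂) = (m2 P₁).prod (m2 P₂) := by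
  rw [pairProd, m2, m2, m2, Measure.map_map measurable_snd (by fun_prop),
    Measure.map_prod_map _ _ measurable_snd measurable_snd]
  rfl

lemma lintegral_pairProd {F : (X₁ × X₂) × (Y₁ × Y₂) → ℝ≥0∞} (hF : Measurable F) :
    ∫⁻ z, F z ∂pairProd P₁ P₂ =
      ∫⁻ z₁, ∫⁻ z₂, F ((z₁.1, z₂.1), (z₁.2, z₂.2)) ∂P₂ ∂P₁ := by
  rw [pairProd, lintegral_map hF (by fun_prop), lintegral_prod _ (by fun_prop)]

end PairProd

theorem BrascampLieb.pairProd {P₁ : Measure (X₁ × Y₁)} {P₂ : Measure (X₂ × Y₂)}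
    [IsProbabilityMeasure P₁] [IsProbabilityMeasure P₂] (h₁ : BrascampLieb P₁ a θ c₁ C₁)
    (h₂ : BrascampLieb P₂ a θ c₂ C₂)
    (hslice : ∀ S, MeasurableSet S → (m1 P₁).prod (m1 P₂) S ≤ c₁ * c₂ →
      m1 P₁ {x | m1 P₂ (Prod.mk x ⁻¹' S) ≠ 0} ≤ c₁ ∧
        ∀ᵐ x ∂m1 P₁, m1 P₂ (Prod.mk x ⁻¹' S) ≤ c₂) :
    BrascampLieb (pairProd P₁ P₂) a θ (c₁ * c₂) (C₁ * C₂) := by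
  intro f g hf hg hc
  rw [m1_pairProd] at hc
  obtain ⟨hc₁, hc₂⟩ := hslice _ (by measurability) hc
  have hc₂' : ∀ᵐ z ∂P₁, m1 P₂ {x | f (z.1, x) ≠ 0} ≤ c₂ :=
    ae_of_ae_map measurable_fst.aemeasurable hc₂
  set F : X₁ → ℝ≥0∞ := fun x => ∫⁻ x', f (x, x') ∂m1 P₂
  set G : Y₁ → ℝ≥0∞ := fun y => ∫⁻ y', g (y, y') ∂m2 P₂
  have hF : Measurable F := hf.lintegral_prod_right'
  have hG : Measurable G := hg.lintegral_prod_right'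
  have hFc : m1 P₁ {x | F x ≠ 0} ≤ c₁ :=
    (measure_mono fun x (hx : F x ≠ 0) h0 => hx <|
      (lintegral_eq_zero_iff (by fun_prop)).2 (ae_iff.2 h0)).trans hc₁
  calc ∫⁻ z, f z.1 ^ a * g z.2 ^ θ ∂BL.pairProd P₁ P₂
      = ∫⁻ z₁, ∫⁻ z₂, f (z₁.1, z₂.1) ^ a * g (z₁.2, z₂.2) ^ θ ∂P₂ ∂P₁ :=
        lintegral_pairProd P₁ P₂ (by fun_prop)
    _ ≤ ∫⁻ z₁, C₂ * (F z₁.1 ^ a * G z₁.2 ^ θ) ∂P₁ := by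
        refine lintegral_mono_ae ?_
        filter_upwards [hc₂'] with z hz
        exact h₂ (fun x => f (z.1, x)) (fun y => g (z.2, y)) (by fun_prop) (by fun_prop) hz
    _ = C₂ * ∫⁻ z₁, F z₁.1 ^ a * G z₁.2 ^ θ ∂P₁ := lintegral_const_mul _ (by fun_prop)
    _ ≤ C₂ * (C₁ * ((∫⁻ x, F x ∂m1 P₁) ^ a * (∫⁻ y, G y ∂m2 P₁) ^ θ)) := by
        gcongr
        exact h₁ F G hF hG hFc
    _ = _ := by
        rw [m1_pairProd, m2_pairProd, lintegral_prod _ hf.aemeasurable,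
          lintegral_prod _ hg.aemeasurable, ← mul_assoc, mul_comm C₂]

section PairPow

variable {n : ℕ} {P : Measure (X × Y)} [IsProbabilityMeasure P]

instance (μ : Measure X) [IsProbabilityMeasure μ] : IsProbabilityMeasure (piM n μ) :=
  inferInstanceAs (IsProbabilityMeasure (Measure.pi _))

lemma measurable_fstv : Measurable (fstv : (Fin n → X × Y) → Fin n → X) :=
  measurable_pi_lambda _ fun i => (measurable_pi_apply i).fst

lemma measurable_sndv : Measurable (sndv : (Fin n → X × Y) → Fin n → Y) :=
  measurable_pi_lambda _ fun i => (measurable_pi_apply i).snd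

instance : IsProbabilityMeasure (pairPow n P) :=
  Measure.isProbabilityMeasure_map (measurable_fstv.prodMk measurable_sndv).aemeasurable

lemma m1_pairPow : m1 (pairPow n P) = piM n (m1 P) := by
  rw [pairPow, m1, Measure.map_map measurable_fst (measurable_fstv.prodMk measurable_sndv)]
  exact Measure.pi_map_pi fun _ => measurable_fst.aemeasurable

lemma m2_pairPow : m2 (pairPow n P) = piM n (m2 P) := by
  rw [pairPow, m2, Measure.map_map measurable_snd (measurable_fstv.prodMk measurable_sndv)]
  exact Measure.pi_map_pi fun _ => measurable_snd.aemeasurable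

lemma measurable_finCons :
    Measurable fun x : X × (Fin n → X) => (Fin.cons x.1 x.2 : Fin (n + 1) → X) :=
  measurable_pi_lambda _ <| Fin.cases measurable_fst fun i =>
    (measurable_pi_apply i).comp measurable_snd

lemma piM_succ (μ : Measure X) [IsProbabilityMeasure μ] :
    piM (n + 1) μ = (μ.prod (piM n μ)).map fun x => (Fin.cons x.1 x.2 : Fin (n + 1) → X) := by
  have h := (measurePreserving_piFinSuccAbove (fun _ : Fin (n + 1) => μ) 0).symm.map_eq
  simpa [piM, MeasurableEquiv.piFinSuccAbove, Fin.insertNthEquiv] using h.symm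

lemma pairPow_succ :
    pairPow (n + 1) P = (pairProd P (pairPow n P)).map
      (Prod.map (fun x => (Fin.cons x.1 x.2 : Fin (n + 1) → X))
        fun y => (Fin.cons y.1 y.2 : Fin (n + 1) → Y)) := by
  have hv : Measurable fun z : Fin n → X × Y => (fstv z, sndv z) :=
    measurable_fstv.prodMk measurable_sndv
  have hprod : P.prod (pairPow n P) =
      (P.prod (piM n P)).map (Prod.map id fun z => (fstv z, sndv z)) := by
    rw [← Measure.map_prod_map _ _ measurable_id hv, Measure.map_id, pairPow]
  rw [pairPow, piM_succ, pairProd, hprod,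
    Measure.map_map (measurable_fstv.prodMk measurable_sndv) measurable_finCons,
    Measure.map_map (measurable_finCons.prodMap measurable_finCons) (by fun_prop),
    Measure.map_map ((measurable_finCons.prodMap measurable_finCons).comp (by fun_prop))
      (by fun_prop)]
  congr 1
  ext1 z
  exact Prod.ext (funext (Fin.cases rfl fun _ => rfl)) (funext (Fin.cases rfl fun _ => rfl))

lemma BrascampLieb.pairPow_zero : BrascampLieb (pairPow 0 P) a θ c 1 := by
  intro f g _ _ _
  have hconst (z : (Fin 0 → X) × (Fin 0 → Y)) :
      f z.1 ^ a * g z.2 ^ θ = f default ^ a * g default ^ θ := by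
    rw [Subsingleton.elim z default]
    rfl
  simp [hconst, lintegral_unique, m1_pairPow, m2_pairPow]

lemma HasMassFloor.piM {μ : Measure X} [IsProbabilityMeasure μ] (h : HasMassFloor μ c) (n : ℕ) :
    HasMassFloor (piM n μ) (c ^ n) := by
  induction n with
  | zero =>
    intro A _ h0
    rw [Subsingleton.eq_univ_of_nonempty (nonempty_of_measure_ne_zero h0), measure_univ, pow_zero]
  | succ n ih =>
    rw [piM_succ, pow_succ']
    exact (h.prod ih).map measurable_finCons

theorem BrascampLieb.pairPow (hP : BrascampLieb P a θ 1 C) (n : ℕ) :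
    BrascampLieb (pairPow n P) a θ 1 (C ^ n) := by
  induction n with
  | zero => rw [pow_zero]; exact pairPow_zero
  | succ n ih =>
    rw [pairPow_succ, pow_succ', ← one_mul (1 : ℝ≥0∞)]
    refine (hP.pairProd ih fun S _ _ => ?_).map measurable_finCons measurable_finCons
    exact ⟨prob_le_one, ae_of_all _ fun _ => prob_le_one⟩

theorem BrascampLieb.pairPow_of_hasMassFloor (hP : BrascampLieb P a θ c C)
    (hc : HasMassFloor (m1 P) c) (hc0 : c ≠ 0) (hct : c ≠ ∞) (n : ℕ) :
    BrascampLieb (BL.pairPow n P) a θ (c ^ n) (C ^ n) := by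
  induction n with
  | zero => rw [pow_zero C]; exact pairPow_zero
  | succ n ih =>
    have hcn : HasMassFloor (m1 (BL.pairPow n P)) (c ^ n) := m1_pairPow (P := P) ▸ hc.piM n
    rw [pairPow_succ, pow_succ', pow_succ']
    refine (hP.pairProd ih fun S hS hSc => ⟨?_, hc.ae_slice_le hcn (ENNReal.pow_ne_top hct) hS hSc⟩
      ).map measurable_finCons measurable_finCons
    have h := (hcn.mul_measure_slice_le_prod hS).trans (hSc.trans_eq (mul_comm _ _))
    exact (ENNReal.mul_le_mul_iff_right (pow_ne_zero n hc0) (ENNReal.pow_ne_top hct)).1 h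

end PairPow

end Tensorization

/-! ### Conditional kernels -/

lemma indicator_univ_pi_prod {ι Z : Type*} [Fintype ι] (B : ι → Set Z) (f : ι → Z → ℝ≥0∞)
    (y : ι → Z) :
    (univ.pi B).indicator (fun y => ∏ i, f i (y i)) y = ∏ i, (B i).indicator (f i) (y i) := by
  by_cases hy : y ∈ univ.pi B
  · rw [indicator_of_mem hy]
    exact Finset.prod_congr rfl fun i _ => (indicator_of_mem (hy i (mem_univ i)) _).symm
  · obtain ⟨i, hi⟩ : ∃ i, y i ∉ B i := by simpa [mem_univ_pi] using hy
    rw [indicator_of_notMem hy, Finset.prod_eq_zero (Finset.mem_univ i) (indicator_of_notMem hi _)]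

section CondKernel

variable {P : Measure (X × Y)} {κ : Kernel Y X}

lemma lintegral_pi_prod_eval {ι : Type*} [Fintype ι] (μ : ι → Measure Y)
    [∀ i, IsProbabilityMeasure (μ i)] {f : ι → Y → ℝ≥0∞} (hf : ∀ i, Measurable (f i)) :
    ∫⁻ y, ∏ i, f i (y i) ∂Measure.pi μ = ∏ i, ∫⁻ y, f i y ∂μ i := by
  rw [lintegral_prod_eq_prod_lintegral_of_indepFun Finset.univ _
    (iIndepFun_pi fun i => (hf i).aemeasurable) fun i => (hf i).comp (measurable_pi_apply i)]
  exact Finset.prod_congr rfl fun i _ => (measurePreserving_eval μ i).lintegral_comp (hf i)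

lemma isCondKernel_iff [IsProbabilityMeasure P] [IsMarkovKernel κ] :
    IsCondKernel P κ ↔ P = (m2 P ⊗ₘ κ).map Prod.swap := by
  have hbox {A : Set X} {B : Set Y} (hA : MeasurableSet A) (hB : MeasurableSet B) :
      (m2 P ⊗ₘ κ).map Prod.swap (A ×ˢ B) = ∫⁻ y in B, κ y A ∂m2 P := by
    rw [Measure.map_apply measurable_swap (hA.prod hB), preimage_swap_prod,
      Measure.compProd_apply_prod hB hA]
  exact ⟨fun h => Measure.ext_prod fun hA hB => (h _ _ hA hB).trans (hbox hA hB).symm,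
    fun h A B hA hB => (congrArg (· (A ×ˢ B)) h).trans (hbox hA hB)⟩

lemma IsCondKernel.lintegral_eq [IsProbabilityMeasure P] [IsMarkovKernel κ]
    (hκ : IsCondKernel P κ) {F : X × Y → ℝ≥0∞} (hF : Measurable F) :
    ∫⁻ z, F z ∂P = ∫⁻ y, ∫⁻ x, F (x, y) ∂κ y ∂m2 P := by
  conv_lhs => rw [isCondKernel_iff.1 hκ]
  rw [lintegral_map hF measurable_swap, Measure.lintegral_compProd (by fun_prop)]
  rfl

lemma measurable_kpi (n : ℕ) (κ : Kernel Y X) [IsMarkovKernel κ] :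
    Measurable (kpi κ : (Fin n → Y) → Measure (Fin n → X)) := by
  have (y : Fin n → Y) : IsProbabilityMeasure (kpi κ y) :=
    inferInstanceAs (IsProbabilityMeasure (Measure.pi _))
  refine Measurable.measure_of_isPiSystem_of_isProbabilityMeasure generateFrom_pi.symm
    isPiSystem_pi ?_
  rintro _ ⟨s, hs, rfl⟩
  simp only [kpi, Measure.pi_pi]
  exact Finset.measurable_prod _ fun i _ =>
    (κ.measurable_coe (hs i (mem_univ i))).comp (measurable_pi_apply i)

/-- The `n`-fold tensor power of the kernel `κ`. -/
def piKernel (n : ℕ) (κ : Kernel Y X) [IsMarkovKernel κ] : Kernel (Fin n → Y) (Fin n → X) :=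
  ⟨kpi κ, measurable_kpi n κ⟩

instance (n : ℕ) [IsMarkovKernel κ] : IsMarkovKernel (piKernel n κ) :=
  ⟨fun _ => inferInstanceAs (IsProbabilityMeasure (Measure.pi _))⟩

lemma IsCondKernel.piM_eq_map [IsProbabilityMeasure P] [IsMarkovKernel κ]
    (hκ : IsCondKernel P κ) (n : ℕ) :
    piM n P = (piM n (m2 P) ⊗ₘ piKernel n κ).map fun w i => (w.2 i, w.1 i) := by
  have hzip : Measurable fun (w : (Fin n → Y) × (Fin n → X)) i => (w.2 i, w.1 i) := by fun_prop
  refine Measure.pi_eq_generateFrom (C := fun _ => image2 (· ×ˢ ·) {A | MeasurableSet A}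
    {B | MeasurableSet B}) (fun _ => generateFrom_prod) (fun _ => isPiSystem_prod)
    (fun _ => ⟨fun _ => univ, fun _ => ⟨univ, .univ, univ, .univ, univ_prod_univ⟩,
      fun _ => measure_lt_top _ _, iUnion_const _⟩) fun s hs => ?_
  choose A hA B hB hs using hs
  have hpre : (fun (w : (Fin n → Y) × (Fin n → X)) i => (w.2 i, w.1 i)) ⁻¹' univ.pi s
      = univ.pi B ×ˢ univ.pi A := by
    ext w
    simp only [← hs, mem_preimage, mem_univ_pi, mem_prod, ← forall_and, and_comm]
  have hind (i : Fin n) : Measurable ((B i).indicator fun y => κ y (A i)) :=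
    (κ.measurable_coe (hA i)).indicator (hB i)
  calc _ = ∫⁻ y in univ.pi B, kpi κ y (univ.pi A) ∂piM n (m2 P) := by
        rw [Measure.map_apply hzip (MeasurableSet.univ_pi fun i => hs i ▸ (hA i).prod (hB i)),
          hpre, Measure.compProd_apply_prod (.univ_pi hB) (.univ_pi hA)]
        rfl
    _ = ∫⁻ y, ∏ i, (B i).indicator (fun y => κ y (A i)) (y i) ∂piM n (m2 P) := by
        rw [← lintegral_indicator (.univ_pi hB)]
        simp only [kpi, Measure.pi_pi]
        exact lintegral_congr fun y => indicator_univ_pi_prod B (fun i y => κ y (A i)) y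
    _ = ∏ i, P (s i) := by
        rw [piM, lintegral_pi_prod_eval _ hind]
        refine Finset.prod_congr rfl fun i _ => ?_
        rw [lintegral_indicator (hB i), ← hs, hκ _ _ (hA i) (hB i)]

theorem IsCondKernel.pairPow [IsProbabilityMeasure P] [IsMarkovKernel κ] (hκ : IsCondKernel P κ)
    (n : ℕ) : IsCondKernel (pairPow n P) (piKernel n κ) := by
  rw [isCondKernel_iff, m2_pairPow, BL.pairPow, hκ.piM_eq_map n, Measure.map_map
    (measurable_fstv.prodMk measurable_sndv) (by fun_prop)]
  rfl

end CondKernel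

/-! ### Norm bounds for conditional expectations -/

section Duality

variable {μ : Measure X} {F : X → ℝ≥0∞} {q : ℝ} {D : ℝ≥0∞}

lemma enorm_le_iff (hq : 0 < q) : enorm μ F q ≤ D ↔ ∫⁻ x, F x ^ q ∂μ ≤ D ^ q := by
  rw [enorm, one_div, ENNReal.rpow_inv_le_iff hq]

lemma enorm_le_of_ae_le [IsProbabilityMeasure μ] (hq : 0 < q) (h : ∀ᵐ x ∂μ, F x ≤ D) :
    enorm μ F q ≤ D := by
  refine (enorm_le_iff hq).2 ?_
  calc ∫⁻ x, F x ^ q ∂μ ≤ ∫⁻ _, D ^ q ∂μ :=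
        lintegral_mono_ae (h.mono fun x hx => ENNReal.rpow_le_rpow hx hq.le)
    _ = D ^ q := by rw [lintegral_const, measure_univ, mul_one]

lemma le_rpow_of_le_mul_rpow {Z : ℝ≥0∞} (hq : 0 < q) (hZ : Z ≠ ∞) (h : Z ≤ D * Z ^ (1 - 1 / q)) :
    Z ≤ D ^ q := by
  rcases eq_or_ne Z 0 with rfl | h0
  · exact zero_le
  rw [← ENNReal.rpow_inv_le_iff hq]
  have hpow : Z ^ (1 - 1 / q) * Z ^ (-(1 - 1 / q)) = 1 := by
    rw [← ENNReal.rpow_add _ _ h0 hZ, add_neg_cancel, ENNReal.rpow_zero]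
  calc Z ^ q⁻¹ = Z ^ (1 : ℝ) * Z ^ (-(1 - 1 / q)) := by
        rw [← ENNReal.rpow_add _ _ h0 hZ]
        ring_nf
    _ ≤ D * Z ^ (1 - 1 / q) * Z ^ (-(1 - 1 / q)) := by
        rw [ENNReal.rpow_one]
        gcongr
    _ = D := by rw [mul_assoc, hpow, mul_one]

lemma rpow_le_mul_rpow_rpow {t u : ℝ≥0∞} (htu : t ≤ u) (hq : 1 ≤ q) :
    t ^ q ≤ u * (t ^ q) ^ (1 - 1 / q) := by
  have hexp : q * (1 - 1 / q) = q - 1 := by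
    rw [mul_sub, mul_one, mul_one_div_cancel (by linarith)]
  calc t ^ q = t ^ (1 + (q - 1)) := by rw [add_sub_cancel]
    _ = t * t ^ (q - 1) := by
        rw [ENNReal.rpow_add_of_nonneg _ _ zero_le_one (by linarith), ENNReal.rpow_one]
    _ ≤ u * (t ^ q) ^ (1 - 1 / q) := by
        rw [← ENNReal.rpow_mul, hexp]
        gcongr

theorem enorm_le_of_forall_lintegral_mul_le [IsFiniteMeasure μ] (hF : Measurable F) (hq : 1 ≤ q)
    (h : ∀ g : X → ℝ≥0∞, Measurable g →
      ∫⁻ x, F x * g x ^ (1 - 1 / q) ∂μ ≤ D * (∫⁻ x, g x ∂μ) ^ (1 - 1 / q)) :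
    enorm μ F q ≤ D := by
  have hq0 : 0 < q := by linarith
  set G := SimpleFunc.eapprox F
  have hFG (x : X) : F x ^ q = ⨆ n, G n x ^ q := by
    rw [← ennreal_iSup_rpow _ hq0.le, SimpleFunc.iSup_eapprox_apply hF]
  have hG (n : ℕ) (x : X) : G n x ≤ F x :=
    (le_iSup (fun n => G n x) n).trans_eq (SimpleFunc.iSup_eapprox_apply hF x)
  refine (enorm_le_iff hq0).2 ?_
  simp only [hFG]
  rw [lintegral_iSup (fun n => by fun_prop) fun m n hmn x =>
    ENNReal.rpow_le_rpow (SimpleFunc.monotone_eapprox F hmn x) hq0.le]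
  refine iSup_le fun n => le_rpow_of_le_mul_rpow hq0 ?_ ?_
  · refine ne_of_eq_of_ne (SimpleFunc.lintegral_eq_lintegral ((G n).map (· ^ q)) μ) ?_
    exact ((SimpleFunc.finMeasSupp_iff_support.2 (measure_lt_top μ _)).lintegral_lt_top
      (ae_of_all _ fun x => ENNReal.rpow_ne_top_of_nonneg hq0.le
        (SimpleFunc.eapprox_lt_top F n x).ne)).ne
  · exact (lintegral_mono fun x => rpow_le_mul_rpow_rpow (hG n x) hq).trans (h _ (by fun_prop))

end Duality

section CondExpBounds

variable {P : Measure (X × Y)} {κ : Kernel Y X} {F : X → ℝ≥0∞} {q : ℝ}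

lemma IsCondKernel.bind_m2 (hκ : IsCondKernel P κ) : (m2 P).bind κ = m1 P := by
  ext A hA
  rw [Measure.bind_apply hA κ.aemeasurable, m1, Measure.map_apply measurable_fst hA, ← prod_univ,
    hκ A univ hA .univ, Measure.restrict_univ]

theorem IsCondKernel.enorm_lintegral_le_enormInf [IsProbabilityMeasure P] [IsMarkovKernel κ]
    (hκ : IsCondKernel P κ) (hq : 0 < q) :
    enorm (m2 P) (fun y => ∫⁻ x, F x ∂κ y) q ≤ enormInf (m1 P) F := by
  have hF : ∀ᵐ x ∂(m2 P).bind κ, F x ≤ enormInf (m1 P) F :=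
    hκ.bind_m2 ▸ ENNReal.ae_le_essSup F
  refine enorm_le_of_ae_le hq ?_
  filter_upwards [Measure.ae_ae_of_ae_comp hF] with y hy
  calc ∫⁻ x, F x ∂κ y ≤ ∫⁻ _, enormInf (m1 P) F ∂κ y := lintegral_mono_ae hy
    _ = enormInf (m1 P) F := by rw [lintegral_const, measure_univ, mul_one]

theorem BrascampLieb.enorm_lintegral_le [IsProbabilityMeasure P] [IsMarkovKernel κ] {r : ℝ}
    {c C : ℝ≥0∞} (hP : BrascampLieb P (1 / r) (1 - 1 / q) c C) (hκ : IsCondKernel P κ) (hq : 1 ≤ q)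
    (hr : 0 < r) (hF : Measurable F) (hc : m1 P {x | F x ≠ 0} ≤ c) :
    enorm (m2 P) (fun y => ∫⁻ x, F x ∂κ y) q ≤ C * enorm (m1 P) F r := by
  have hroot (x : X) : (F x ^ r) ^ (1 / r) = F x := by
    rw [← ENNReal.rpow_mul, mul_one_div_cancel hr.ne', ENNReal.rpow_one]
  have hsupp : {x | F x ^ r ≠ 0} = {x | F x ≠ 0} := by simp [hr, hr.le]
  refine enorm_le_of_forall_lintegral_mul_le hF.lintegral_kernel hq fun g hg => ?_
  have h := hP (fun x => F x ^ r) g (hF.pow_const r) hg (hsupp ▸ hc)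
  rw [hκ.lintegral_eq (by fun_prop)] at h
  simp only [hroot, lintegral_mul_const _ hF, ← mul_assoc] at h
  exact h

end CondExpBounds

/-! ### Entropies and comparison of norms -/

section ExtendedLog

variable {A B : ℝ≥0∞} {k β x : ℝ}

lemma eexp_coe (x : ℝ) : eexp (x : EReal) = ENNReal.ofReal (Real.exp x) := by
  simp [eexp]

lemma elog_ofReal_exp (x : ℝ) : elog (ENNReal.ofReal (Real.exp x)) = (x : EReal) := by
  simp [elog, Real.exp_pos, (Real.exp_pos x).le]

lemma exists_eq_ofReal_exp (h0 : A ≠ 0) (ht : A ≠ ∞) : ∃ a : ℝ, A = ENNReal.ofReal (Real.exp a) :=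
  ⟨Real.log A.toReal, by rw [Real.exp_log (ENNReal.toReal_pos h0 ht), ENNReal.ofReal_toReal ht]⟩

lemma elog_le_coe_iff : elog A ≤ (x : EReal) ↔ A ≤ ENNReal.ofReal (Real.exp x) := by
  rcases eq_or_ne A 0 with rfl | h0
  · simp [elog]
  rcases eq_or_ne A ∞ with rfl | ht
  · simp [elog]
  obtain ⟨a, rfl⟩ := exists_eq_ofReal_exp h0 ht
  rw [elog_ofReal_exp, EReal.coe_le_coe_iff, ENNReal.ofReal_le_ofReal_iff (Real.exp_pos _).le,
    Real.exp_le_exp]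

lemma div_le_of_le_mul_or_mul_le (hk : k ≠ 0) (hpos : 0 < k → β ≤ k * x)
    (hneg : k < 0 → k * x ≤ β) : β / k ≤ x := by
  rcases hk.lt_or_gt with h | h
  · exact (div_le_iff_of_neg' h).2 (hneg h)
  · exact (div_le_iff₀' h).2 (hpos h)

lemma le_ofReal_exp_mul_of_elog_sub (hk : k ≠ 0)
    (hpos : 0 < k → (β : EReal) ≤ (k : EReal) * (elog A - elog B))
    (hneg : k < 0 → (k : EReal) * (elog A - elog B) ≤ (β : EReal)) :
    B ≤ ENNReal.ofReal (Real.exp (-(β / k))) * A := by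
  rcases eq_or_ne A ∞ with rfl | hAt
  · rw [ENNReal.mul_top (by simp [Real.exp_pos])]
    exact le_top
  rcases eq_or_ne B 0 with rfl | hB0
  · exact zero_le
  have hne : elog A - elog B ≠ ⊥ := by
    intro h
    rw [h] at hpos hneg
    rcases hk.lt_or_gt with hk' | hk'
    · simpa [EReal.coe_mul_bot_of_neg hk'] using hneg hk'
    · simpa [EReal.coe_mul_bot_of_pos hk'] using hpos hk'
  have hA0 : A ≠ 0 := by
    rintro rfl
    simp [elog] at hne
  have hBt : B ≠ ∞ := by
    rintro rfl
    simp [elog] at hne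
  obtain ⟨a, rfl⟩ := exists_eq_ofReal_exp hA0 hAt
  obtain ⟨b, rfl⟩ := exists_eq_ofReal_exp hB0 hBt
  rw [elog_ofReal_exp, elog_ofReal_exp] at hpos hneg
  have hab : β / k ≤ a - b :=
    div_le_of_le_mul_or_mul_le hk (by exact_mod_cast hpos) (by exact_mod_cast hneg)
  rw [← ENNReal.ofReal_mul (Real.exp_pos _).le, ← Real.exp_add]
  exact ENNReal.ofReal_le_ofReal (Real.exp_le_exp.2 (by linarith))

lemma le_eexp_mul {E R : ℝ≥0∞} (hR : R ≠ 0) {n : ℕ} (hn : 1 ≤ n) {Θ : EReal} (hΘ : Θ ≠ ⊤)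
    {t : ℝ} (h : ∀ T : ℝ, Θ = T → E ≤ ENNReal.ofReal (Real.exp (-n * (T - t))) * R) :
    E ≤ eexp (((-(n : ℝ) : ℝ) : EReal) * (Θ - (t : EReal))) * R := by
  induction Θ with
  | bot =>
    have hn0 : -(n : ℝ) < 0 := neg_lt_zero.2 (by exact_mod_cast hn)
    rw [EReal.bot_sub, EReal.coe_mul_bot_of_neg hn0, eexp, if_neg (by simp), if_pos rfl,
      ENNReal.top_mul hR]
    exact le_top
  | coe T =>
    rw [← EReal.coe_sub, ← EReal.coe_mul, eexp_coe]
    exact h T rfl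
  | top => exact absurd rfl hΘ

end ExtendedLog

section Norms

variable {μ : Measure X} {f : X → ℝ} {p r β : ℝ}

lemma measure_pos_ne_zero (hf : Adm μ f) : μ {x | 0 < f x} ≠ 0 := by
  intro h
  have hle : ∀ᵐ x ∂μ, ¬ 0 < f x := by simpa [ae_iff] using h
  exact hf.2.2 (hle.mono fun x hx => le_antisymm (not_lt.1 hx) (hf.2.1 x))

lemma rnorm_ne_zero (hf : Adm μ f) (hp : 0 < p) : rnorm μ f p ≠ 0 := by
  intro h
  rw [rnorm, enorm, ENNReal.rpow_eq_zero_iff_of_pos (by positivity),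
    lintegral_eq_zero_iff (hf.1.ennreal_ofReal.pow_const p)] at h
  refine hf.2.2 (h.mono fun x hx => le_antisymm ?_ (hf.2.1 x))
  simpa [ENNReal.rpow_eq_zero_iff_of_pos hp] using hx

theorem rnorm_le_of_ent (hp : 0 < p) (hr : 0 < r) (hrp : r ≤ p → (β : EReal) ≤ ent μ f p r)
    (hpr : p ≤ r → ent μ f p r ≤ (β : EReal)) :
    rnorm μ f r ≤ ENNReal.ofReal (Real.exp (β / p - β / r)) * rnorm μ f p := by
  rcases eq_or_ne r p with rfl | hne
  · simp
  have hsub : p - r ≠ 0 := sub_ne_zero.2 hne.symm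
  have hexp : β / p - β / r = -(β / (p * r / (p - r))) := by
    field_simp
    ring
  simp only [ent, if_neg hne, if_neg hr.ne'] at hrp hpr
  rw [hexp]
  refine le_ofReal_exp_mul_of_elog_sub (div_ne_zero (by positivity) hsub) (fun h => hrp ?_)
    fun h => hpr ?_
  · exact (sub_pos.1 ((div_pos_iff_of_pos_left (by positivity)).1 h)).le
  · by_contra! hlt
    exact h.not_ge (div_nonneg (by positivity) (sub_nonneg.2 hlt.le))

theorem rnormInf_le_of_entTop (hp : 0 < p) (h : entTop μ f p ≤ (β : EReal)) :
    rnormInf μ f ≤ ENNReal.ofReal (Real.exp (β / p)) * rnorm μ f p := by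
  by_cases htop : rnormInf μ f = ∞
  · simp [entTop, htop, hp] at h
  rw [entTop, if_neg htop] at h
  have hle := le_ofReal_exp_mul_of_elog_sub (neg_ne_zero.2 hp.ne')
    (fun h' => absurd h' (by simpa using hp.le)) fun _ => h
  rwa [div_neg, neg_neg] at hle

end Norms

/-! ### The three regimes of the slope -/

section Regimes

variable {P : Measure (X × Y)} [IsProbabilityMeasure P] {κ : Kernel Y X} [IsMarkovKernel κ]
  {α q p T : ℝ} {n : ℕ} {f : (Fin n → X) → ℝ}

lemma IsSubgrad1.coe_le {F : ℝ → EReal} {u : ℝ≥0∞} (h : IsSubgrad1 F α u) (hu : u ≠ ∞)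
    (hT : F α = T) {s : ℝ} (hs : 0 ≤ s) : ((T + u.toReal * (s - α) : ℝ) : EReal) ≤ F s := by
  simpa [hT, EReal.coe_ennreal_toReal hu] using h s hs

lemma IsSubgrad1.eq_top {F : ℝ → EReal} (h : IsSubgrad1 F α ∞) (hT : F α = T) {s : ℝ}
    (hs : 0 ≤ s) (hαs : α < s) : F s = ⊤ := by
  have hle := h s hs
  rw [hT, EReal.coe_ennreal_top, EReal.top_mul_coe_of_pos (sub_pos.2 hαs), EReal.coe_add_top] at hle
  exact top_le_iff.1 hle

theorem entropyIneq_of_affine_le (hq : 1 ≤ q) {v : ℝ}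
    (h : ∀ s, 0 ≤ s → ((T + v * (s - α) : ℝ) : EReal) ≤ ThetaGe1 P (conj q) s) (c : ℝ≥0∞) :
    EntropyIneq P v (1 - 1 / q) (v * α - T) c := by
  intro π hπ hfin _
  have hle := (h _ ENNReal.toReal_nonneg).trans (ThetaGe1_conj_le hq hfin le_rfl)
  rw [EReal.coe_le_coe_iff] at hle
  linarith

theorem entropyIneq_of_forall_eq_top (hq : 1 ≤ q) (hT : ThetaGe1 P (conj q) α = T)
    (h : ∀ s, 0 ≤ s → α < s → ThetaGe1 P (conj q) s = ⊤) (v : ℝ) :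
    EntropyIneq P v (1 - 1 / q) (v * α - T) (ENNReal.ofReal (Real.exp (-α))) := by
  rintro π hπ hfin ⟨A, hA, hAα, hπA⟩
  have hge := le_toReal_klDiv_of_measure_le (klDiv_m1_ne_top hfin) hA hπA hAα
  have hle : (klDiv (m1 π) (m1 P)).toReal ≤ α := by
    by_contra! hlt
    have htop := ThetaGe1_conj_le hq hfin le_rfl
    rw [h _ ENNReal.toReal_nonneg hlt] at htop
    exact EReal.coe_ne_top _ (top_le_iff.1 htop)
  have hΘ := ThetaGe1_conj_le hq hfin hge
  rw [hT, EReal.coe_le_coe_iff] at hΘ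
  rw [le_antisymm hle hge]
  linarith

lemma hasMassFloor_of_forall_eq_top (hq : 1 ≤ q)
    (h : ∀ s, 0 ≤ s → α < s → ThetaGe1 P (conj q) s = ⊤) :
    HasMassFloor (m1 P) (ENNReal.ofReal (Real.exp (-α))) := by
  intro A hA h0
  by_contra! hlt
  obtain ⟨b, hb⟩ := exists_eq_ofReal_exp h0 (measure_ne_top _ _)
  have hb0 : b ≤ 0 := by simpa [hb] using prob_le_one (μ := m1 P) (s := A)
  have hbα : b < -α := by
    rwa [hb, ENNReal.ofReal_lt_ofReal_iff (Real.exp_pos _), Real.exp_lt_exp] at hlt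
  refine ThetaGe1_conj_ne_top hq hA h0 ?_ (h (-b) (by linarith) (by linarith))
  rw [neg_neg, hb]

lemma ofReal_exp_mul_sub_pow (α T p : ℝ) (n : ℕ) :
    ENNReal.ofReal (Real.exp (1 / p * α - T)) ^ n =
      ENNReal.ofReal (Real.exp (-n * (T - α / p))) := by
  rw [← ENNReal.ofReal_pow (Real.exp_pos _).le, ← Real.exp_nat_mul]
  ring_nf

theorem BrascampLieb.enorm_condOp_le {c C : ℝ≥0∞}
    (hP : BrascampLieb (BL.pairPow n P) (1 / p) (1 - 1 / q) c C) (hκ : IsCondKernel P κ)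
    (hq : 1 ≤ q) (hp : 0 < p) (hf : Measurable f) (hc : piM n (m1 P) {x | 0 < f x} ≤ c) :
    enorm (piM n (m2 P)) (condOp κ f) q ≤ C * rnorm (piM n (m1 P)) f p := by
  have h := hP.enorm_lintegral_le (hκ.pairPow n) hq hp hf.ennreal_ofReal
    (by simpa [m1_pairPow, pos_iff_ne_zero.symm] using hc)
  rwa [m1_pairPow, m2_pairPow] at h

theorem IsCondKernel.enorm_condOp_le_rnormInf (hκ : IsCondKernel P κ) (hq : 0 < q) :
    enorm (piM n (m2 P)) (condOp κ f) q ≤ rnormInf (piM n (m1 P)) f := by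
  have h := (hκ.pairPow n).enorm_lintegral_le_enormInf (F := fun x => ENNReal.ofReal (f x)) hq
  rwa [m1_pairPow, m2_pairPow] at h

theorem enorm_condOp_le_of_isSubgrad1_top (hκ : IsCondKernel P κ) (hq : 1 ≤ q)
    (hgrad : IsSubgrad1 (ThetaGe1 P (conj q)) α ∞) (hT : ThetaGe1 P (conj q) α = T) (hp : 0 < p)
    (hf : Measurable f)
    (hsupp : piM n (m1 P) {x | 0 < f x} ≤ ENNReal.ofReal (Real.exp (-α)) ^ n) :
    enorm (piM n (m2 P)) (condOp κ f) q ≤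
      ENNReal.ofReal (Real.exp (-n * (T - α / p))) * rnorm (piM n (m1 P)) f p := by
  have htop (s : ℝ) : 0 ≤ s → α < s → ThetaGe1 P (conj q) s = ⊤ := hgrad.eq_top hT
  have hBL := (entropyIneq_of_forall_eq_top hq hT htop (1 / p)).brascampLieb (one_div_pos.2 hp)
    (sub_nonneg.2 ((div_le_one (by linarith)).2 hq))
  have hBLn := hBL.pairPow_of_hasMassFloor (hasMassFloor_of_forall_eq_top hq htop)
    (by simp [Real.exp_pos]) ENNReal.ofReal_ne_top n
  rw [← ofReal_exp_mul_sub_pow]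
  exact hBLn.enorm_condOp_le hκ hq hp hf hsupp

theorem enorm_condOp_le_of_isSubgrad1_inv (hκ : IsCondKernel P κ) (hq : 1 ≤ q) {r : ℝ}
    (hr : 0 < r) (hgrad : IsSubgrad1 (ThetaGe1 P (conj q)) α (ENNReal.ofReal r)⁻¹)
    (hT : ThetaGe1 P (conj q) α = T) (hf : Measurable f) :
    enorm (piM n (m2 P)) (condOp κ f) q ≤
      ENNReal.ofReal (Real.exp (-n * (T - α / r))) * rnorm (piM n (m1 P)) f r := by
  have hE : EntropyIneq P (1 / r) (1 - 1 / q) (1 / r * α - T) 1 :=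
    entropyIneq_of_affine_le hq (fun s hs => by
      simpa [hr.le] using hgrad.coe_le (by simpa using hr) hT hs) 1
  have hBL := hE.brascampLieb (one_div_pos.2 hr) (sub_nonneg.2 ((div_le_one (by linarith)).2 hq))
  rw [← ofReal_exp_mul_sub_pow]
  exact (hBL.pairPow n).enorm_condOp_le hκ hq hr hf (by simpa using prob_le_one)

theorem enorm_condOp_le_of_ent (hκ : IsCondKernel P κ) (hq : 1 ≤ q) {r : ℝ} (hr : 0 < r)
    (hgrad : IsSubgrad1 (ThetaGe1 P (conj q)) α (ENNReal.ofReal r)⁻¹)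
    (hT : ThetaGe1 P (conj q) α = T) (hp : 0 < p) (hf : Measurable f)
    (hrp : r ≤ p → ((n * α : ℝ) : EReal) ≤ ent (piM n (m1 P)) f p r)
    (hpr : p ≤ r → ent (piM n (m1 P)) f p r ≤ ((n * α : ℝ) : EReal)) :
    enorm (piM n (m2 P)) (condOp κ f) q ≤
      ENNReal.ofReal (Real.exp (-n * (T - α / p))) * rnorm (piM n (m1 P)) f p := by
  refine (enorm_condOp_le_of_isSubgrad1_inv hκ hq hr hgrad hT hf).trans ?_
  refine (mul_le_mul_right (rnorm_le_of_ent hp hr hrp hpr) _).trans_eq ?_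
  rw [← mul_assoc, ← ENNReal.ofReal_mul (Real.exp_pos _).le, ← Real.exp_add]
  ring_nf

theorem enorm_condOp_le_of_entTop (hκ : IsCondKernel P κ) (hq : 1 ≤ q)
    (hgrad : IsSubgrad1 (ThetaGe1 P (conj q)) α 0) (hT : ThetaGe1 P (conj q) α = T) (hp : 0 < p)
    (hent : entTop (piM n (m1 P)) f p ≤ ((n * α : ℝ) : EReal)) :
    enorm (piM n (m2 P)) (condOp κ f) q ≤
      ENNReal.ofReal (Real.exp (-n * (T - α / p))) * rnorm (piM n (m1 P)) f p := by
  have hT0 : T ≤ 0 := by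
    simpa using (hgrad.coe_le ENNReal.zero_ne_top hT le_rfl).trans (ThetaGe1_conj_zero_le hq)
  refine (hκ.enorm_condOp_le_rnormInf (by linarith)).trans ?_
  refine (rnormInf_le_of_entTop hp hent).trans ?_
  gcongr
  have hnT : (n : ℝ) * T ≤ 0 := mul_nonpos_of_nonneg_of_nonpos n.cast_nonneg hT0
  rw [mul_div_assoc]
  linarith

end Regimes

section Finiteness

variable {μ : Measure X} {P : Measure (X × Y)} [IsProbabilityMeasure P] {α q : ℝ} {n : ℕ}

lemma IsSubgrad1.ne_top {F : ℝ → EReal} {u : ℝ≥0∞} (h : IsSubgrad1 F α u) (hu : u ≠ ∞)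
    (h0 : F 0 ≠ ⊤) : F α ≠ ⊤ := by
  intro hα
  have hle := h 0 le_rfl
  rw [hα, ← EReal.coe_ennreal_toReal hu, ← EReal.coe_mul, EReal.top_add_coe] at hle
  exact h0 (top_le_iff.1 hle)

lemma measure_le_exp_pow_of_le_neg_elog {A : Set X}
    (h : ((n * α : ℝ) : EReal) ≤ -elog (μ A)) : μ A ≤ ENNReal.ofReal (Real.exp (-α)) ^ n := by
  rw [EReal.le_neg, ← EReal.coe_neg, elog_le_coe_iff] at h
  rwa [← ENNReal.ofReal_pow (Real.exp_pos _).le, ← Real.exp_nat_mul, mul_neg]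

lemma piM_eq_zero_of_le_pow [IsProbabilityMeasure μ] {c : ℝ≥0∞} (hc0 : c ≠ 0) (hct : c ≠ ∞)
    (hμ : ∀ A, MeasurableSet A → μ A ≤ c → μ A = 0) (hn : 1 ≤ n) {S : Set (Fin n → X)}
    (hS : MeasurableSet S) (hSc : piM n μ S ≤ c ^ n) : piM n μ S = 0 := by
  obtain ⟨m, rfl⟩ := Nat.exists_eq_add_of_le' hn
  have hfloor : HasMassFloor μ c := fun A hA h0 =>
    (le_total c (μ A)).resolve_right fun hle => h0 (hμ A hA hle)
  rw [piM_succ, Measure.map_apply measurable_finCons hS] at hSc ⊢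
  have hS' := measurable_finCons hS
  refine (Measure.measure_prod_null hS').2 (ae_iff.2 (hμ _ (measurableSet_slice_ne_zero hS') ?_))
  refine (ENNReal.mul_le_mul_iff_right (pow_ne_zero m hc0) (ENNReal.pow_ne_top hct)).1 ?_
  exact ((hfloor.piM m).mul_measure_slice_le_prod hS').trans (hSc.trans_eq (pow_succ c m))

theorem ThetaGe1_conj_ne_top_of_piM (hq : 1 ≤ q) (hn : 1 ≤ n) {S : Set (Fin n → X)}
    (hS : MeasurableSet S) (h0 : piM n (m1 P) S ≠ 0)
    (hSα : piM n (m1 P) S ≤ ENNReal.ofReal (Real.exp (-α)) ^ n) :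
    ThetaGe1 P (conj q) α ≠ ⊤ := by
  intro htop
  refine h0 (piM_eq_zero_of_le_pow (by simp [Real.exp_pos]) ENNReal.ofReal_ne_top ?_ hn hS hSα)
  intro A hA hAα
  by_contra hA0
  exact ThetaGe1_conj_ne_top hq hA hA0 hAα htop

end Finiteness

lemma entE_zero (μ : Measure X) (f : X → ℝ) {p : ℝ} (hp : 0 < p) :
    entE μ f p 0 = -elog (μ {x | 0 < f x}) := by
  simp [entE, ent, hp.ne]

lemma entE_top (μ : Measure X) (f : X → ℝ) (p : ℝ) : entE μ f p ∞ = entTop μ f p :=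
  if_pos rfl

lemma entE_ofReal (μ : Measure X) (f : X → ℝ) (p : ℝ) {r : ℝ} (hr : 0 ≤ r) :
    entE μ f p (ENNReal.ofReal r) = ent μ f p r := by
  simp [entE, hr]

theorem statement6_general (P : Measure (X × Y)) [IsProbabilityMeasure P]
    (κ : Kernel Y X) [IsMarkovKernel κ] (hκ : IsCondKernel P κ) (α : ℝ) (q : ℝ) (hq : 1 ≤ q)
    (ps : ℝ≥0∞) (hgrad : IsSubgrad1 (fun s => ThetaGe1 P (conj q) s) α ps⁻¹)
    (p : ℝ) (hp : 0 < p) (n : ℕ) (hn : 1 ≤ n)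
    (f : (Fin n → X) → ℝ) (hf : Adm (piM n (m1 P)) f)
    (hf1 : ps ≤ ENNReal.ofReal p →
      (((n : ℝ) * α : ℝ) : EReal) ≤ entE (piM n (m1 P)) f p ps)
    (hf2 : ENNReal.ofReal p ≤ ps →
      entE (piM n (m1 P)) f p ps ≤ (((n : ℝ) * α : ℝ) : EReal)) :
    enorm (piM n (m2 P)) (condOp κ f) q ≤
      eexp (((-(n : ℝ) : ℝ) : EReal) * (ThetaGe1 P (conj q) α - ((α / p : ℝ) : EReal)))
        * rnorm (piM n (m1 P)) f p := by
  have hR := rnorm_ne_zero hf hp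
  rcases eq_or_ne ps 0 with rfl | h0
  · rw [ENNReal.inv_zero] at hgrad
    have hsupp := measure_le_exp_pow_of_le_neg_elog (entE_zero _ f hp ▸ hf1 zero_le)
    have hΘ := ThetaGe1_conj_ne_top_of_piM hq hn (measurableSet_lt measurable_const hf.1)
      (measure_pos_ne_zero hf) hsupp
    exact le_eexp_mul hR hn hΘ fun T hT =>
      enorm_condOp_le_of_isSubgrad1_top hκ hq hgrad hT hp hf.1 hsupp
  have hΘ := hgrad.ne_top (ENNReal.inv_ne_top.2 h0)
    (ne_top_of_le_ne_top EReal.zero_ne_top (ThetaGe1_conj_zero_le hq))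
  refine le_eexp_mul hR hn hΘ fun T hT => ?_
  rcases eq_or_ne ps ∞ with rfl | htop
  · rw [ENNReal.inv_top] at hgrad
    exact enorm_condOp_le_of_entTop hκ hq hgrad hT hp (entE_top _ f p ▸ hf2 le_top)
  have hr := ENNReal.toReal_pos h0 htop
  rw [← ENNReal.ofReal_toReal htop] at hgrad hf1 hf2
  rw [entE_ofReal _ f p hr.le] at hf1 hf2
  exact enorm_condOp_le_of_ent hκ hq hr hgrad hT hp hf.1
    (fun h => hf1 (ENNReal.ofReal_le_ofReal h)) fun h => hf2 (ENNReal.ofReal_le_ofReal h)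

/-- Strong forward Brascamp–Lieb inequality, single-function version;
Theorem `thm:strongBL_single`, part 1. -/
theorem statement6 [TopologicalSpace X] [PolishSpace X] [BorelSpace X]
    [TopologicalSpace Y] [PolishSpace Y] [BorelSpace Y]
    (P : Measure (X × Y)) [IsProbabilityMeasure P]
    (hndX : ∀ x : X, m1 P ≠ Measure.dirac x) (hndY : ∀ y : Y, m2 P ≠ Measure.dirac y)
    (κ : Kernel Y X) [IsMarkovKernel κ] (hκ : IsCondKernel P κ)
    (α : ℝ) (hα0 : 0 ≤ α) (hαmax : (α : EReal) ≤ alphaMax (m1 P))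
    (q : ℝ) (hq : 1 ≤ q)
    (ps : ℝ≥0∞) (hgrad : IsSubgrad1 (fun s => ThetaGe1 P (conj q) s) α ps⁻¹)
    (p : ℝ) (hp : 0 < p)
    (n : ℕ) (hn : 1 ≤ n)
    (f : (Fin n → X) → ℝ) (hf : Adm (piM n (m1 P)) f)
    (hf1 : ps ≤ ENNReal.ofReal p →
      (((n : ℝ) * α : ℝ) : EReal) ≤ entE (piM n (m1 P)) f p ps)
    (hf2 : ENNReal.ofReal p ≤ ps →
      entE (piM n (m1 P)) f p ps ≤ (((n : ℝ) * α : ℝ) : EReal)) :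
    enorm (piM n (m2 P)) (condOp κ f) q ≤
      eexp (((-(n : ℝ) : ℝ) : EReal) * (ThetaGe1 P (conj q) α - ((α / p : ℝ) : EReal)))
        * rnorm (piM n (m1 P)) f p :=
  statement6_general P κ hκ α q hq ps hgrad p hp n hn f hf hf1 hf2

end BL
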